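/- arXiv:2303.02855 — 4 statements merged into one kernel-verified Lean document; each statement's English description precedes it below -/
import Mathlib

section
/- n(3) > A(7,184): there exists a word over a three-letter alphabet of length greater than A(7,184) satisfying property (*). -/
/-- `friedmanBlock s i` is the block `s_i s_{i+1} … s_{2i}` of the word `s`
(1-based indices); it has length `i + 1` when `2*i ≤ s.length`. -/
def friedmanBlock {α : Type} (s : List α) (i : ℕ) : List α :=
  (s.drop (i - 1)).take (i + 1)

/-- Friedman's property (*): there are no indices `1 ≤ i < j ≤ n/2` such that
`s^(i)` is a (scattered) subword of `s^(j)`.  Note `j ≤ n/2 ↔ 2*j ≤ n`. -/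
def SatisfiesStar {α : Type} (s : List α) : Prop :=
  ∀ i j : ℕ, 1 ≤ i → i < j → 2 * j ≤ s.length →
    ¬ (friedmanBlock s i).Sublist (friedmanBlock s j)

/-- `friedmanN k` = n(k), the length of a longest word over a `k`-letter
alphabet satisfying (*). -/
noncomputable def friedmanN (k : ℕ) : ℕ :=
  sSup {n : ℕ | ∃ s : List (Fin k), s.length = n ∧ SatisfiesStar s}

/-- The modified Ackermann function: `A(1,c) = 2c`, `A(f,1) = 2` for `f ≥ 2`,
and `A(f,c) = A(f-1, A(f,c-1))` for `f, c ≥ 2` (values at `f = 0` or `c = 0`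
are irrelevant junk values). -/
def ackF : ℕ → ℕ → ℕ
  | 0, _ => 0
  | 1, c => 2 * c
  | _ + 2, 0 => 2
  | _ + 2, 1 => 2
  | f + 2, c + 2 => ackF (f + 1) (ackF (f + 2) (c + 1))
termination_by f c => (f, c)

/-!
The fast-growing hierarchy produces very long sequences of vectors in `ℕ⁸` that are bad for the
componentwise order although the entries of the `k`-th vector are bounded by `k + 4`. Such a
sequence is written into a word whose letters are, past a short opening, the marker `2` and the
filler `1`: group `k` of markers encodes the `k`-th vector in the gaps between its last nine
markers, and its position roughly doubles with `k`, so that every window `s_i, …, s_{2i}` contains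
all nine separators of some group. An embedding of one window into a later one maps markers to
markers and fillers to fillers. Counting markers shows that it maps the separators of this group
onto those of a later group, and comparing gap lengths shows that the two vectors contradict
badness.
-/

open ONote (fastGrowing ofNat)

theorem fastGrowing_ofNat_succ (d : ℕ) :
    fastGrowing (ofNat (d + 1)) = fun n => (fastGrowing (ofNat d))^[n] n := by
  refine ONote.fastGrowing_succ _ ?_
  cases d <;> rfl

theorem id_le_fastGrowing_ofNat (d : ℕ) : id ≤ fastGrowing (ofNat d) := by
  induction d with
  | zero =>
    rw [ONote.ofNat_zero, ONote.fastGrowing_zero]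
    exact Nat.le_succ
  | succ d ih =>
    rw [fastGrowing_ofNat_succ]
    exact fun n => Function.id_le_iterate_of_id_le ih n n

theorem monotone_fastGrowing_ofNat (d : ℕ) : Monotone (fastGrowing (ofNat d)) := by
  induction d with
  | zero =>
    rw [ONote.ofNat_zero, ONote.fastGrowing_zero]
    exact Order.succ_mono
  | succ d ih =>
    rw [fastGrowing_ofNat_succ]
    intro m n hmn
    calc (fastGrowing (ofNat d))^[m] m
      _ ≤ (fastGrowing (ofNat d))^[m] n := ih.iterate m hmn
      _ ≤ (fastGrowing (ofNat d))^[n] n :=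
        Function.monotone_iterate_of_id_le (id_le_fastGrowing_ofNat d) hmn n

theorem iterate_fastGrowing_ofNat_le (d : ℕ) {m n : ℕ} (hmn : m ≤ n) :
    (fastGrowing (ofNat d))^[m] n ≤ fastGrowing (ofNat (d + 1)) n := by
  rw [fastGrowing_ofNat_succ]
  exact Function.monotone_iterate_of_id_le (id_le_fastGrowing_ofNat d) hmn n

theorem fastGrowing_ofNat_le_of_le {d e n : ℕ} (hde : d ≤ e) (hn : 1 ≤ n) :
    fastGrowing (ofNat d) n ≤ fastGrowing (ofNat e) n :=
  Nat.le_induction le_rfl (fun e _ ih => ih.trans (iterate_fastGrowing_ofNat_le e hn)) e hde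

theorem ackF_pos (d : ℕ) {c : ℕ} (hc : 1 ≤ c) : 0 < ackF (d + 1) c := by
  induction d generalizing c with
  | zero => rw [ackF]; omega
  | succ d ih =>
    induction c, hc using Nat.le_induction with
    | base => rw [ackF]; norm_num
    | succ c hc ihc =>
      obtain ⟨c, rfl⟩ := Nat.exists_eq_add_of_le' hc
      rw [ackF]
      exact ih ihc

theorem ackF_le_fastGrowing_ofNat (d : ℕ) {c : ℕ} (hc : 1 ≤ c) :
    ackF (d + 1) c ≤ fastGrowing (ofNat (d + 1)) c := by
  induction d generalizing c with
  | zero =>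
    rw [zero_add, ackF, ONote.ofNat_one, ONote.fastGrowing_one]
  | succ d ih =>
    obtain ⟨c, rfl⟩ := Nat.exists_eq_add_of_le' hc
    set F := fastGrowing (ofNat (d + 1))
    have ackF_one : ackF (d + 2) 1 = ackF (d + 1) 1 := by
      rcases d with _ | d <;> simp [ackF]
    calc ackF (d + 2) (c + 1)
      _ ≤ F^[c + 1] (c + 1) := by
        refine (monotone_fastGrowing_ofNat (d + 1)).seq_le_seq
          (x := fun m => ackF (d + 2) (m + 1)) (y := fun m => F^[m + 1] (c + 1)) c ?_ ?_ ?_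
        · calc ackF (d + 2) 1
            _ = ackF (d + 1) 1 := ackF_one
            _ ≤ F 1 := ih le_rfl
            _ ≤ F (c + 1) := monotone_fastGrowing_ofNat (d + 1) hc
        · intro m _
          rw [ackF]
          exact ih (ackF_pos (d + 1) m.succ_pos)
        · intro m _
          exact (Function.iterate_succ_apply' F (m + 1) (c + 1)).ge
      _ ≤ fastGrowing (ofNat (d + 2)) (c + 1) := iterate_fastGrowing_ofNat_le (d + 1) le_rfl

theorem ackF_seven_le_fastGrowing_eight : ackF 7 184 ≤ fastGrowing (ofNat 8) 5 := by
  have two_five : fastGrowing (ofNat 2) 5 = 160 := congrFun ONote.fastGrowing_two 5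
  have three_five : 184 ≤ fastGrowing (ofNat 3) 5 :=
    calc 184 ≤ fastGrowing (ofNat 1) 160 := by rw [ONote.ofNat_one, ONote.fastGrowing_one]; norm_num
      _ ≤ fastGrowing (ofNat 2) 160 := fastGrowing_ofNat_le_of_le one_le_two (by norm_num)
      _ = (fastGrowing (ofNat 2))^[2] 5 := by rw [Function.iterate_succ_apply, two_five]; rfl
      _ ≤ fastGrowing (ofNat 3) 5 := iterate_fastGrowing_ofNat_le 2 (by norm_num)
  calc ackF 7 184
    _ ≤ fastGrowing (ofNat 7) 184 := ackF_le_fastGrowing_ofNat 6 (by norm_num)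
    _ ≤ fastGrowing (ofNat 7) (fastGrowing (ofNat 7) 5) :=
      monotone_fastGrowing_ofNat 7
        (three_five.trans (fastGrowing_ofNat_le_of_le (by norm_num) (by norm_num)))
    _ ≤ fastGrowing (ofNat 8) 5 := iterate_fastGrowing_ofNat_le 7 (m := 2) (by norm_num)

/-- A controlled bad sequence for Dickson's lemma: `v K, …, v (N - 1)` is a sequence of vectors in
`ℕᵈ` no term of which lies below a later one, with the entries of `v k` bounded by the index `k`.
The bound is imposed on `Set.Ici K` only, so that `v` may take any values before `K`. -/
structure IsControlledBad {d : ℕ} (v : ℕ → Fin d → ℕ) (K N : ℕ) : Prop where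
  lt : ∀ k, K ≤ k → ∀ c, v k c < k
  not_le : ∀ k l, K ≤ k → k < l → l < N → ¬ v k ≤ v l

theorem isControlledBad_zero {d K : ℕ} (hK : 1 ≤ K) :
    IsControlledBad (fun _ => (0 : Fin d → ℕ)) K K where
  lt _ hk _ := hK.trans hk
  not_le _ _ _ _ _ := by omega

theorem IsControlledBad.cons_append {d K M N n : ℕ} {v : ℕ → Fin d → ℕ}
    {w : ℕ → Fin (d + 1) → ℕ} (hv : IsControlledBad v K M) (hw : IsControlledBad w M N)
    (hnK : n < K) (hwn : ∀ k, M ≤ k → k < N → w k 0 < n) :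
    IsControlledBad (fun k => if k < M then Fin.cons n (v k) else w k) K N where
  lt k hk := by
    split_ifs with hkM
    · exact Fin.forall_fin_succ.2 ⟨by simpa using hnK.trans_le hk, by simpa using hv.lt k hk⟩
    · exact hw.lt k (not_lt.1 hkM)
  not_le k l hk hkl hl := by
    rcases lt_or_ge l M with hlM | hlM
    · have not_le := hv.not_le k l hk hkl hlM
      simpa [hlM, hkl.trans hlM, Fin.cons_le_cons] using not_le
    · rcases lt_or_ge k M with hkM | hkM
      · have head_lt := hwn l hlM hl
        intro h
        have := h 0
        simp [hkM, hlM.not_gt] at this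
        omega
      · simpa [hkM.not_gt, hlM.not_gt] using hw.not_le k l hkM hkl hl

theorem exists_isControlledBad (d : ℕ) {K : ℕ} (hK : 1 ≤ K) :
    ∃ v : ℕ → Fin d → ℕ, IsControlledBad v K (fastGrowing (ofNat d) K) := by
  induction d generalizing K with
  | zero =>
    refine ⟨fun _ => 0, fun _ _ c => c.elim0, fun k l _ _ hl => ?_⟩
    rw [ONote.ofNat_zero, ONote.fastGrowing_zero] at hl
    omega
  | succ d ih =>
    set F := fastGrowing (ofNat d)
    have of_iterate (n : ℕ) : ∀ K, 1 ≤ K → n ≤ K → ∃ v : ℕ → Fin (d + 1) → ℕ,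
        IsControlledBad v K (F^[n] K) ∧ ∀ k, K ≤ k → k < F^[n] K → v k 0 < n := by
      induction n with
      | zero => exact fun K hK _ => ⟨_, isControlledBad_zero hK, fun _ _ _ => by
          simp only [Function.iterate_zero, id] at *; omega⟩
      | succ n ihn =>
        intro K hK hnK
        have le_F : K ≤ F K := id_le_fastGrowing_ofNat d K
        obtain ⟨v, hv⟩ := ih hK
        obtain ⟨w, hw, hwn⟩ := ihn (F K) (hK.trans le_F) (by omega)
        refine ⟨_, hv.cons_append hw hnK hwn, fun k _ hkN => ?_⟩
        split_ifs with hkM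
        · exact n.lt_succ_self
        · exact (hwn k (not_lt.1 hkM) hkN).trans n.lt_succ_self
    obtain ⟨v, hv, -⟩ := of_iterate K K hK le_rfl
    rw [fastGrowing_ofNat_succ]
    exact ⟨v, hv⟩

/-! ### Counting the terms of an increasing sequence -/

open Classical in
/-- The number of terms of a strictly increasing sequence `W` that are smaller than `x`. Applied to
the sequence of markers it counts the markers before `x`; applied to the sequence of group starts
it gives the first group that starts at or after `x`. -/
noncomputable def countBelow (W : ℕ → ℕ) (x : ℕ) : ℕ := Nat.count (· ∈ Set.range W) x

section CountBelow

variable {W : ℕ → ℕ} {n x : ℕ}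

theorem countBelow_le_iff (hW : StrictMono W) : countBelow W x ≤ n ↔ x ≤ W n := by
  classical
  have infinite_range : (Set.range W).Infinite := Set.infinite_range_of_injective hW.injective
  have nth_eq : Nat.nth (· ∈ Set.range W) = W :=
    ((Nat.nth_strictMono infinite_range).range_inj hW).1
      (Nat.range_nth_of_infinite infinite_range)
  rw [countBelow, Nat.count_le_iff_le_nth (p := (· ∈ Set.range W)) infinite_range, nth_eq]

theorem lt_countBelow_iff (hW : StrictMono W) : n < countBelow W x ↔ W n < x := by
  rw [← not_le, countBelow_le_iff hW, not_le]

theorem monotone_countBelow (W : ℕ → ℕ) : Monotone (countBelow W) := by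
  classical
  exact Nat.count_monotone _

theorem countBelow_apply (hW : StrictMono W) (n : ℕ) : countBelow W (W n) = n :=
  eq_of_forall_ge_iff fun _ => (countBelow_le_iff hW).trans hW.le_iff_le

theorem countBelow_apply_add_one (hW : StrictMono W) (n : ℕ) : countBelow W (W n + 1) = n + 1 :=
  eq_of_forall_lt_iff fun _ =>
    (lt_countBelow_iff hW).trans <| Nat.lt_succ_iff.trans <| hW.le_iff_le.trans Nat.lt_succ_iff.symm

theorem countBelow_eq_succ (hW : StrictMono W) (hn : W n < x) (hx : x ≤ W (n + 1)) :
    countBelow W x = n + 1 :=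
  le_antisymm ((countBelow_le_iff hW).2 hx) ((lt_countBelow_iff hW).2 hn)

theorem notMem_range_of_lt_of_lt (hW : StrictMono W) (hn : W n < x) (hx : x < W (n + 1)) :
    x ∉ Set.range W := by
  rintro ⟨m, rfl⟩
  have := hW.lt_iff_lt.1 hn
  have := hW.lt_iff_lt.1 hx
  omega

end CountBelow

/-! ### Windows and their embeddings -/

/-- The block `s_i, …, s_{2i}` of an infinite word `s`. -/
def window {α : Type} (s : ℕ → α) (i : ℕ) : List α := (List.range' i (i + 1)).map s

section Window

variable {α : Type} {s : ℕ → α} {i j : ℕ}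

theorem length_window : (window s i).length = i + 1 := by simp [window]

theorem getElem?_window_of_le {m : ℕ} (hm : m ≤ i) : (window s i)[m]? = some (s (i + m)) := by
  simp [window, Nat.lt_succ_iff.2 hm]

theorem mem_window {a : α} : a ∈ window s i ↔ ∃ x, i ≤ x ∧ x ≤ 2 * i ∧ s x = a := by
  simp only [window, List.mem_map, List.mem_range'_1, and_assoc]
  exact exists_congr fun x => by rw [show x < i + (i + 1) ↔ x ≤ 2 * i by omega]

theorem friedmanBlock_map_range' {N : ℕ} (hi : 1 ≤ i) (hN : 2 * i ≤ N) :
    friedmanBlock ((List.range' 1 N).map s) i = window s i := by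
  rw [friedmanBlock, window, ← List.map_drop, ← List.map_take, List.drop_range',
    List.take_range'_of_length_ge (by omega), mul_one, Nat.add_sub_cancel' hi]

/-- The positions `f x`, for `x` in `[i, 2i]`, spell an occurrence of the `i`-th window of `s` as a
subword of the `j`-th one. -/
structure IsWindowEmbedding (s : ℕ → α) (i j : ℕ) (f : ℕ → ℕ) : Prop where
  lt : ∀ x y, i ≤ x → x < y → y ≤ 2 * i → f x < f y
  ge : ∀ x, i ≤ x → x ≤ 2 * i → j ≤ f x
  le : ∀ x, i ≤ x → x ≤ 2 * i → f x ≤ 2 * j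
  apply_eq : ∀ x, i ≤ x → x ≤ 2 * i → s (f x) = s x

theorem exists_isWindowEmbedding (h : (window s i).Sublist (window s j)) :
    ∃ f, IsWindowEmbedding s i j f := by
  obtain ⟨g, hg⟩ := List.sublist_iff_exists_orderEmbedding_getElem?_eq.1 h
  have g_spec (m : ℕ) (hm : m ≤ i) : g m ≤ j ∧ s (j + g m) = s (i + m) := by
    have getElem_eq := hg m
    rw [getElem?_window_of_le hm] at getElem_eq
    have g_lt := (List.getElem?_eq_some_iff.1 getElem_eq.symm).1
    have g_le : g m ≤ j := by rw [length_window] at g_lt; omega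
    rw [getElem?_window_of_le g_le] at getElem_eq
    exact ⟨g_le, (Option.some.inj getElem_eq).symm⟩
  refine ⟨fun x => j + g (x - i), fun x y hx hxy _ => ?_, fun x _ _ => Nat.le_add_right _ _,
    fun x _ hx => ?_, fun x hx hx' => ?_⟩
  · exact Nat.add_lt_add_left (g.strictMono (by omega)) j
  · have := (g_spec (x - i) (by omega)).1
    omega
  · have := (g_spec (x - i) (by omega)).2
    rwa [Nat.add_sub_cancel' hx] at this

namespace IsWindowEmbedding

variable {f : ℕ → ℕ} {x y : ℕ} (h : IsWindowEmbedding s i j f)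

include h

theorem add_le_add (hx : i ≤ x) (hxy : x ≤ y) (hy : y ≤ 2 * i) : f x + y ≤ f y + x := by
  induction y, hxy using Nat.le_induction with
  | base => exact le_rfl
  | succ y hxy ih =>
    have := h.lt y (y + 1) (by omega) (by omega) hy
    have := ih (by omega)
    omega

theorem add_le_apply_add (hx : i ≤ x) (hx' : x ≤ 2 * i) : j + x ≤ f x + i := by
  have := h.add_le_add le_rfl hx hx'
  have := h.ge i le_rfl (by omega)
  omega

variable {p : ℕ → Prop} [DecidablePred p]

theorem count_add_count_le (hp : ∀ x, i ≤ x → x ≤ 2 * i → p x → p (f x)) (hx : i ≤ x)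
    (hxy : x ≤ y) (hy : y ≤ 2 * i) :
    Nat.count p y + Nat.count p (f x) ≤ Nat.count p (f y) + Nat.count p x := by
  induction y, hxy using Nat.le_induction with
  | base => omega
  | succ y hxy ih =>
    have := ih (by omega)
    have image := hp y (by omega) (by omega)
    have le_image := Nat.count_monotone p (h.lt y (y + 1) (by omega) (by omega) hy)
    grind

theorem count_add_one_add_count_le (hp : ∀ x, i ≤ x → x ≤ 2 * i → p x → p (f x)) (hx : i ≤ x)
    (hxy : x ≤ y) (hy : y ≤ 2 * i) :
    Nat.count p (y + 1) + Nat.count p (f x) ≤ Nat.count p (f y + 1) + Nat.count p x := by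
  have count_le := h.count_add_count_le hp hx hxy hy
  have image := hp y (by omega) hy
  grind

end IsWindowEmbedding

end Window

/-! ### Positions of the markers -/

/-- The position of the first marker of group `k`; it is chosen so that the window starting there
ends just before the next group. -/
def groupStart (k : ℕ) : ℕ := 241 * 2 ^ k - 1

theorem groupStart_zero : groupStart 0 = 240 := rfl

theorem groupStart_succ (k : ℕ) : groupStart (k + 1) = 2 * groupStart k + 1 := by
  have := Nat.one_le_two_pow (n := k)
  rw [groupStart, groupStart, pow_succ]
  omega

theorem add_le_groupStart (k : ℕ) : 240 + k ≤ groupStart k := by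
  have := k.lt_two_pow_self
  rw [groupStart]
  omega

theorem strictMono_groupStart : StrictMono groupStart :=
  strictMono_nat_of_lt_succ fun k => by rw [groupStart_succ]; omega

/-- The position of the first of the nine separators of group `k`. The gap `72 * 2 ^ k + 8 * k + 48`
between the initial run of the group and this separator makes a window that starts here
long enough to contain all separators of group `k + 1`, see `groupEnd_succ_le`. -/
def firstSeparator (k : ℕ) : ℕ := groupStart k + 18 + (72 * 2 ^ k + 8 * k + 48)

theorem groupStart_add_le_firstSeparator (k : ℕ) : groupStart k + 138 ≤ firstSeparator k := by
  have := Nat.one_le_two_pow (n := k)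
  rw [firstSeparator]
  omega

/-- Vectors of eight digits to be encoded in the groups of the word, the entries `digit k c` with
`8 ≤ c` being ignored. The bound keeps the separators of group `k` before group `k + 1`. -/
structure ControlledDigits where
  digit : ℕ → ℕ → ℕ
  digit_le : ∀ k c, digit k c ≤ k + 4

namespace ControlledDigits

variable (D : ControlledDigits) (k : ℕ)

/-- The position of the `c`-th separator of group `k`; `D.digit k c + 1` fillers lie between
the separators `c` and `c + 1`. -/
def separator (c : ℕ) : ℕ := firstSeparator k + ∑ x ∈ Finset.range c, (D.digit k x + 2)

/-- The position following the last separator of group `k`. -/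
def groupEnd : ℕ := D.separator k 8 + 1

theorem separator_zero : D.separator k 0 = firstSeparator k := rfl

theorem separator_succ (c : ℕ) :
    D.separator k (c + 1) = D.separator k c + D.digit k c + 2 := by
  rw [separator, separator, Finset.sum_range_succ]
  omega

theorem separator_le (c : ℕ) : D.separator k c ≤ firstSeparator k + c * (k + 6) := by
  have sum_le := Finset.sum_le_card_nsmul (Finset.range c) (fun x => D.digit k x + 2) (k + 6)
    fun x _ => Nat.add_le_add_right (D.digit_le k x) 2
  rw [Finset.card_range, smul_eq_mul] at sum_le
  exact Nat.add_le_add_left sum_le _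

theorem strictMono_separator : StrictMono (D.separator k) :=
  strictMono_nat_of_lt_succ fun c => by rw [separator_succ]; omega

theorem firstSeparator_lt_groupEnd : firstSeparator k < D.groupEnd k :=
  Nat.lt_succ_iff.2 ((D.strictMono_separator k).monotone (Nat.zero_le 8))

theorem groupEnd_lt_groupStart_succ : D.groupEnd k < groupStart (k + 1) := by
  have := D.separator_le k 8
  have := k.lt_two_pow_self
  rw [groupStart_succ, groupEnd]
  simp only [firstSeparator, groupStart] at *
  omega

theorem groupEnd_succ_le : D.groupEnd (k + 1) ≤ 2 * firstSeparator k := by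
  have := D.separator_le (k + 1) 8
  have := k.lt_two_pow_self
  rw [groupEnd]
  simp only [firstSeparator, groupStart, pow_succ] at *
  omega

theorem groupEnd_zero_le : D.groupEnd 0 ≤ 444 := by
  have := D.separator_le 0 8
  simp only [groupEnd, firstSeparator, groupStart] at *
  omega

/-- The position of the `n`-th marker. The markers fill the positions from `129` up to the first
group; group `k` then consists of the markers `111 + 27 * k + r` with `r < 27`: an initial run of
`18` consecutive ones and `9` separators. -/
def markerPos (n : ℕ) : ℕ :=
  if n < 111 then 129 + n
  else if (n - 111) % 27 < 18 then groupStart ((n - 111) / 27) + (n - 111) % 27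
  else D.separator ((n - 111) / 27) ((n - 111) % 27 - 18)

theorem markerPos_groupRun {r : ℕ} (hr : r < 18) :
    D.markerPos (111 + 27 * k + r) = groupStart k + r := by
  have div_eq : (111 + 27 * k + r - 111) / 27 = k := by omega
  have mod_eq : (111 + 27 * k + r - 111) % 27 = r := by omega
  rw [markerPos, if_neg (by omega), mod_eq, if_pos hr, div_eq]

theorem markerPos_separator {c : ℕ} (hc : c ≤ 8) :
    D.markerPos (111 + 27 * k + 18 + c) = D.separator k c := by
  have div_eq : (111 + 27 * k + 18 + c - 111) / 27 = k := by omega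
  have mod_eq : (111 + 27 * k + 18 + c - 111) % 27 = 18 + c := by omega
  rw [markerPos, if_neg (by omega), mod_eq, if_neg (by omega), div_eq, Nat.add_sub_cancel_left]

theorem markerPos_groupStart : D.markerPos (111 + 27 * k) = groupStart k :=
  D.markerPos_groupRun k (r := 0) (by norm_num)

theorem markerPos_of_le {n : ℕ} (hn : n ≤ 128) : D.markerPos n = 129 + n := by
  rcases lt_or_ge n 111 with hn' | hn'
  · exact if_pos hn'
  · obtain ⟨r, rfl⟩ := Nat.exists_eq_add_of_le hn'
    have := D.markerPos_groupRun 0 (r := r) (by omega)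
    rw [groupStart_zero, mul_zero, add_zero] at this
    omega

theorem markerIndex_cases (n : ℕ) :
    n < 111 ∨ (∃ k r, r < 18 ∧ n = 111 + 27 * k + r) ∨
      ∃ k c, c ≤ 8 ∧ n = 111 + 27 * k + 18 + c := by
  rcases lt_or_ge n 111 with hn | hn
  · exact .inl hn
  rcases lt_or_ge ((n - 111) % 27) 18 with hr | hr
  · exact .inr (.inl ⟨(n - 111) / 27, (n - 111) % 27, hr, by omega⟩)
  · exact .inr (.inr ⟨(n - 111) / 27, (n - 111) % 27 - 18, by omega, by omega⟩)

theorem markerPos_succ_cases (n : ℕ) :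
    D.markerPos (n + 1) = D.markerPos n + 1 ∨
      D.markerPos n < D.markerPos (n + 1) ∧ ∃ k c, c ≤ 9 ∧ n + 1 = 111 + 27 * k + 18 + c := by
  rcases markerIndex_cases n with hn | ⟨k, r, hr, rfl⟩ | ⟨k, c, hc, rfl⟩
  · exact .inl (by rw [D.markerPos_of_le (by omega), D.markerPos_of_le (by omega)]; rfl)
  · rcases Nat.lt_succ_iff_lt_or_eq.1 hr with hr' | rfl
    · left
      rw [add_assoc, D.markerPos_groupRun k hr, D.markerPos_groupRun k (Nat.succ_lt_succ hr')]
      rfl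
    · refine .inr ⟨?_, k, 0, by norm_num, rfl⟩
      have := groupStart_add_le_firstSeparator k
      have first_eq := D.markerPos_separator k (Nat.zero_le 8)
      rw [separator_zero, add_zero] at first_eq
      rw [D.markerPos_groupRun k (by norm_num), add_assoc _ 17 1, first_eq]
      omega
  · refine .inr ⟨?_, k, c + 1, by omega, rfl⟩
    rw [D.markerPos_separator k hc]
    rcases hc.lt_or_eq with hc' | rfl
    · exact (D.strictMono_separator k c.lt_succ_self).trans_eq (D.markerPos_separator k hc').symm
    · have := D.groupEnd_lt_groupStart_succ k
      rw [groupEnd] at this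
      exact lt_of_lt_of_eq (by omega) (D.markerPos_groupStart (k + 1)).symm

theorem strictMono_markerPos : StrictMono D.markerPos :=
  strictMono_nat_of_lt_succ fun n => by
    rcases D.markerPos_succ_cases n with h | h
    · exact h ▸ Nat.lt_succ_self _
    · exact h.1

/-- The number of markers before the position `x`. -/
noncomputable def markerCount (x : ℕ) : ℕ := countBelow D.markerPos x

theorem monotone_markerCount : Monotone D.markerCount := monotone_countBelow _

variable {k} {x : ℕ}

theorem markerCount_le_iff {n : ℕ} : D.markerCount x ≤ n ↔ x ≤ D.markerPos n :=
  countBelow_le_iff D.strictMono_markerPos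

theorem lt_markerCount_iff {n : ℕ} : n < D.markerCount x ↔ D.markerPos n < x :=
  lt_countBelow_iff D.strictMono_markerPos

theorem markerCount_of_le (hx : 129 ≤ x) (hx' : x ≤ 258) : D.markerCount x = x - 129 := by
  rcases hx.eq_or_lt with rfl | hx
  · exact countBelow_apply D.strictMono_markerPos 0
  · obtain ⟨n, rfl⟩ := Nat.exists_eq_add_of_le hx
    have count_eq := countBelow_apply_add_one D.strictMono_markerPos n
    rw [D.markerPos_of_le (by omega), add_right_comm] at count_eq
    exact count_eq.trans (by omega)

theorem markerCount_groupStart : D.markerCount (groupStart k) = 111 + 27 * k := by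
  rw [← D.markerPos_groupStart]
  exact countBelow_apply D.strictMono_markerPos _

theorem markerCount_groupStart_add {r : ℕ} (hr : r ≤ 18) :
    D.markerCount (groupStart k + r) = 111 + 27 * k + r := by
  rcases r with _ | r
  · exact D.markerCount_groupStart
  · rw [← add_assoc, ← D.markerPos_groupRun k hr]
    exact countBelow_apply_add_one D.strictMono_markerPos _

theorem exists_markerCount_eq_of_notMem (hx : 129 ≤ x) (hx' : x ∉ Set.range D.markerPos) :
    ∃ k c, c ≤ 9 ∧ D.markerCount x = 111 + 27 * k + 18 + c := by
  have ne (n : ℕ) : D.markerPos n ≠ x := fun h => hx' ⟨n, h⟩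
  have zero_lt : D.markerPos 0 < x := lt_of_le_of_ne hx (ne 0)
  obtain ⟨n, hn⟩ := Nat.exists_eq_add_of_le' (D.lt_markerCount_iff.2 zero_lt)
  have markerPos_lt : D.markerPos n < x := D.lt_markerCount_iff.1 (by omega)
  have lt_markerPos : x < D.markerPos (n + 1) :=
    lt_of_le_of_ne (D.markerCount_le_iff.1 (by omega)) (ne _).symm
  rcases D.markerPos_succ_cases n with h | ⟨-, k, c, hc, h⟩
  · omega
  · exact ⟨k, c, hc, by omega⟩

theorem markerCount_eq_of_mem_lastGap (hx : D.groupEnd k ≤ x) (hx' : x ≤ groupStart (k + 1)) :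
    D.markerCount x = 111 + 27 * k + 27 :=
  countBelow_eq_succ D.strictMono_markerPos (n := 111 + 27 * k + 26)
    ((D.markerPos_separator k le_rfl).trans_lt hx)
    (hx'.trans_eq (D.markerPos_groupStart (k + 1)).symm)

theorem markerCount_eq_of_mem_digitGap {c : ℕ} (hc : c < 8) (hx : D.separator k c < x)
    (hx' : x ≤ D.separator k (c + 1)) : D.markerCount x = 111 + 27 * k + 18 + c + 1 :=
  countBelow_eq_succ D.strictMono_markerPos ((D.markerPos_separator k hc.le).trans_lt hx)
    (hx'.trans_eq (D.markerPos_separator k hc).symm)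

theorem notMem_range_markerPos_of_mem_digitGap {c : ℕ} (hc : c < 8) (hx : D.separator k c < x)
    (hx' : x < D.separator k (c + 1)) : x ∉ Set.range D.markerPos :=
  notMem_range_of_lt_of_lt D.strictMono_markerPos ((D.markerPos_separator k hc.le).trans_lt hx)
    (hx'.trans_eq (D.markerPos_separator k hc).symm)

theorem notMem_range_markerPos_of_mem_firstGap (hx : groupStart k + 18 ≤ x)
    (hx' : x < firstSeparator k) : x ∉ Set.range D.markerPos := by
  refine notMem_range_of_lt_of_lt D.strictMono_markerPos (n := 111 + 27 * k + 17) ?_ ?_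
  · rw [D.markerPos_groupRun k (by norm_num)]
    omega
  · exact hx'.trans_eq (D.markerPos_separator k (Nat.zero_le 8)).symm

theorem notMem_range_markerPos_of_mem_lastGap (hx : D.groupEnd k ≤ x)
    (hx' : x < groupStart (k + 1)) : x ∉ Set.range D.markerPos :=
  notMem_range_of_lt_of_lt D.strictMono_markerPos (n := 111 + 27 * k + 26)
    ((D.markerPos_separator k le_rfl).trans_lt hx)
    (hx'.trans_eq (D.markerPos_groupStart (k + 1)).symm)

theorem markerCount_eq_of_mem_firstGap (hx : groupStart k + 18 ≤ x) (hx' : x ≤ firstSeparator k) :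
    D.markerCount x = 111 + 27 * k + 18 := by
  refine countBelow_eq_succ D.strictMono_markerPos (n := 111 + 27 * k + 17) ?_ ?_
  · rw [D.markerPos_groupRun k (by norm_num)]
    omega
  · exact hx'.trans_eq (D.markerPos_separator k (Nat.zero_le 8)).symm

end ControlledDigits

/-! ### Embeddings of windows starting after the opening -/

/-- The first `128` letters of the word, the only ones among which `0` occurs. Every window starting
here contains a `0` and hence does not embed into a window starting after the opening. -/
def opening : List (Fin 3) :=
  [0, 1, 1, 0, 2, 0, 2] ++ List.replicate 7 0 ++ [2] ++ List.replicate 4 0 ++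
    List.replicate 12 2 ++ List.replicate 3 0 ++ List.replicate 29 2 ++ List.replicate 2 0 ++
    List.replicate 62 2 ++ [0]

/-- The first group that starts at or after the position `x`. -/
noncomputable def level (x : ℕ) : ℕ := countBelow groupStart x

theorem level_le_iff {x l : ℕ} : level x ≤ l ↔ x ≤ groupStart l :=
  countBelow_le_iff strictMono_groupStart

theorem lt_level_iff {x l : ℕ} : l < level x ↔ groupStart l < x :=
  lt_countBelow_iff strictMono_groupStart

theorem le_groupStart_level (x : ℕ) : x ≤ groupStart (level x) := level_le_iff.1 le_rfl

theorem level_mono : Monotone level := monotone_countBelow _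

namespace ControlledDigits

variable (D : ControlledDigits)

open Classical in
/-- The letters of the word, with positions starting at `1`: after the opening, markers are written
as `2` and all other positions are filled with `1`. -/
noncomputable def letter (x : ℕ) : Fin 3 :=
  if x ≤ 128 then opening.getD (x - 1) 0 else if x ∈ Set.range D.markerPos then 2 else 1

variable {x : ℕ}

theorem letter_eq_two_iff (hx : 128 < x) : D.letter x = 2 ↔ x ∈ Set.range D.markerPos := by
  rw [letter, if_neg hx.not_ge]
  split_ifs <;> simp [*]

theorem letter_ne_zero (hx : 128 < x) : D.letter x ≠ 0 := by
  rw [letter, if_neg hx.not_ge]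
  split_ifs <;> decide

variable {D} {i j k l : ℕ} {f : ℕ → ℕ} (h : IsWindowEmbedding D.letter i j f) (hi : 128 < i)
  (hij : i < j)

section Embedding

include h hi hij

theorem apply_mem_range_markerPos_iff (hx : i ≤ x) (hx' : x ≤ 2 * i) :
    f x ∈ Set.range D.markerPos ↔ x ∈ Set.range D.markerPos := by
  have := h.ge x hx hx'
  rw [← D.letter_eq_two_iff (by omega), ← D.letter_eq_two_iff (by omega), h.apply_eq x hx hx']

theorem markerCount_add_le {y : ℕ} (hx : i ≤ x) (hxy : x ≤ y) (hy : y ≤ 2 * i) :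
    D.markerCount y + D.markerCount (f x) ≤ D.markerCount (f y) + D.markerCount x := by
  classical
  exact h.count_add_count_le (fun x hx hx' => (apply_mem_range_markerPos_iff h hi hij hx hx').2)
    hx hxy hy

theorem markerCount_add_le_of_window {y : ℕ} (hx : i ≤ x) (hxy : x ≤ y) (hy : y ≤ 2 * i) :
    D.markerCount (y + 1) + D.markerCount (f x) ≤
      D.markerCount (2 * j + 1) + D.markerCount x := by
  classical
  have count_le : D.markerCount (y + 1) + D.markerCount (f x) ≤
      D.markerCount (f y + 1) + D.markerCount x := h.count_add_one_add_count_le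
    (fun x hx hx' => (apply_mem_range_markerPos_iff h hi hij hx hx').2) hx hxy hy
  have := D.monotone_markerCount (Nat.add_le_add_right (h.le y (by omega) hy) 1)
  omega

theorem markerCount_window_ge (hx : i ≤ x) (hx' : x ≤ 2 * i) :
    D.markerCount (x + 1) + D.markerCount j ≤ D.markerCount (2 * j + 1) + D.markerCount i := by
  have := markerCount_add_le_of_window h hi hij le_rfl hx hx'
  have := D.monotone_markerCount (h.ge i le_rfl (by omega))
  omega

theorem exists_markerCount_apply_eq (hx : i ≤ x) (hx' : x ≤ 2 * i)
    (hxm : x ∉ Set.range D.markerPos) :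
    ∃ l c, l ≤ level j ∧ level j ≤ l + 1 ∧ c ≤ 9 ∧ D.markerCount (f x) = 111 + 27 * l + 18 + c := by
  have ge := h.ge x hx hx'
  have le := h.le x hx hx'
  obtain ⟨l, c, hc, hl⟩ := D.exists_markerCount_eq_of_notMem (x := f x) (by omega)
    ((apply_mem_range_markerPos_iff h hi hij hx hx').not.2 hxm)
  refine ⟨l, c, ?_, ?_, hc, hl⟩
  · have count_le : D.markerCount (f x) ≤ 111 + 27 * (level j + 1) := by
      have := le_groupStart_level j
      rw [markerCount_le_iff, markerPos_groupStart, groupStart_succ]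
      omega
    omega
  · have lt_count (m : ℕ) (hm : m < level j) : 111 + 27 * m < D.markerCount (f x) := by
      rw [lt_markerCount_iff, markerPos_groupStart]
      exact (lt_level_iff.1 hm).trans_le ge
    by_contra! hlt
    have := lt_count (l + 1) hlt
    omega

theorem digit_le_digit_of_aligned {x₁ x₂ c : ℕ} (hx₁ : i ≤ x₁) (hx₂ : x₂ ≤ 2 * i)
    (hk₁ : D.markerCount x₁ = 111 + 27 * k + 18) (hk₂ : D.markerCount x₂ = 111 + 27 * k + 27)
    (hl₁ : D.markerCount (f x₁) = 111 + 27 * l + 18)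
    (hl₂ : D.markerCount (f x₂) = 111 + 27 * l + 27) (hc : c < 8) :
    D.digit k c ≤ D.digit l c := by
  have separator_k := D.separator_succ k c
  have separator_l := D.separator_succ l c
  set x := D.separator k c + 1
  set y := D.separator k c + D.digit k c + 1
  have count_x : D.markerCount x = 111 + 27 * k + 18 + c + 1 :=
    D.markerCount_eq_of_mem_digitGap hc (by omega) (by omega)
  have count_y : D.markerCount y = 111 + 27 * k + 18 + c + 1 :=
    D.markerCount_eq_of_mem_digitGap hc (by omega) (by omega)
  have x₁_lt : x₁ < x := D.monotone_markerCount.reflect_lt (by omega)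
  have y_lt : y < x₂ := D.monotone_markerCount.reflect_lt (by omega)
  have fx_gt : D.separator l c < f x := by
    rw [← D.markerPos_separator l hc.le, ← lt_markerCount_iff]
    have := markerCount_add_le h hi hij hx₁ x₁_lt.le (by omega)
    omega
  have fy_le : f y ≤ D.separator l (c + 1) := by
    rw [← D.markerPos_separator l hc, ← markerCount_le_iff]
    have := markerCount_add_le h hi hij (by omega) y_lt.le hx₂
    omega
  have fy_ne : f y ≠ D.separator l (c + 1) := by
    rw [← D.markerPos_separator l hc]
    intro fy_eq
    exact D.notMem_range_markerPos_of_mem_digitGap (k := k) hc (by omega) (by omega)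
      ((apply_mem_range_markerPos_iff h hi hij (by omega) (by omega)).1 ⟨_, fy_eq.symm⟩)
  have := h.add_le_add (x := x) (y := y) (by omega) (by omega) (by omega)
  omega

/-- In a bad sequence of digit vectors, up to index `L`, no vector lies below a later one. -/
def IsBad (D : ControlledDigits) (L : ℕ) : Prop :=
  ∀ k l, k < l → l ≤ L → ∃ c < 8, D.digit l c < D.digit k c

/- Between `x₁` and `x₂` lie exactly the nine separators of group `k`, and both are fillers. Their
images therefore enclose at least nine markers, which are either exactly the separators of one group
`l`, where badness excludes `k < l`, or reach from one group into the next. -/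
theorem IsBad.aligned_or_straddling {L x₁ x₂ : ℕ} (hD : D.IsBad L) (hj : level j ≤ L)
    (hx₁ : i ≤ x₁) (hx₂ : x₂ ≤ 2 * i)
    (hk₁ : groupStart k + 18 ≤ x₁) (hk₁' : x₁ < firstSeparator k)
    (hk₂ : D.groupEnd k ≤ x₂) (hk₂' : x₂ < groupStart (k + 1)) :
    (∃ l ≤ k, level j ≤ l + 1 ∧ D.markerCount (f x₁) = 111 + 27 * l + 18) ∨
      ∃ l, level j = l + 1 ∧ D.markerCount (f x₁) ≤ 111 + 27 * l + 27 ∧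
        111 + 27 * (l + 1) + 18 ≤ D.markerCount (f x₂) := by
  have := D.firstSeparator_lt_groupEnd k
  obtain ⟨l₁, c₁, -, le_l₁, hc₁, count_fx₁⟩ :=
    exists_markerCount_apply_eq h hi hij hx₁ (by omega)
      (D.notMem_range_markerPos_of_mem_firstGap hk₁ hk₁')
  obtain ⟨l₂, c₂, l₂_le, -, hc₂, count_fx₂⟩ :=
    exists_markerCount_apply_eq h hi hij (by omega) hx₂
      (D.notMem_range_markerPos_of_mem_lastGap hk₂ hk₂')
  have count_x₁ := D.markerCount_eq_of_mem_firstGap hk₁ hk₁'.le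
  have count_x₂ := D.markerCount_eq_of_mem_lastGap hk₂ hk₂'.le
  have add_nine_le : D.markerCount (f x₁) + 9 ≤ D.markerCount (f x₂) := by
    have := markerCount_add_le h hi hij hx₁ (by omega) hx₂
    omega
  rcases (show l₁ ≤ l₂ by omega).lt_or_eq with hlt | rfl
  · exact .inr ⟨l₁, by omega, by omega, by omega⟩
  · refine .inl ⟨l₁, ?_, le_l₁, by omega⟩
    by_contra! k_lt
    obtain ⟨c, hc, digit_lt⟩ := hD k l₁ k_lt (by omega)
    exact digit_lt.not_ge (digit_le_digit_of_aligned h hi hij hx₁ hx₂ count_x₁ count_x₂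
      (by omega) (by omega) hc)

theorem markerCount_apply_groupRun_ne (hk : i ≤ groupStart k) (hk' : groupStart k + 18 ≤ 2 * i) :
    D.markerCount (f (groupStart k + 18)) ≠ 111 + 27 * k + 18 := by
  have count_17 := D.markerCount_groupStart_add (k := k) (r := 17) (by norm_num)
  have count_18 := D.markerCount_groupStart_add (k := k) (r := 18) le_rfl
  have count_f_17 : 111 + 27 * k + 17 < D.markerCount (f (groupStart k + 17)) := by
    have := h.add_le_apply_add (x := groupStart k + 17) (by omega) (by omega)
    rw [lt_markerCount_iff, D.markerPos_groupRun k (by norm_num)]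
    omega
  have := markerCount_add_le h hi hij (x := groupStart k + 17) (y := groupStart k + 18)
    (by omega) (by omega) (by omega)
  omega

theorem markerCount_apply_firstGap_ne (hk : groupStart k < i) (hk' : i < firstSeparator k) :
    D.markerCount (f (firstSeparator k - 1)) ≠ 111 + 27 * k + 18 := by
  have := groupStart_add_le_firstSeparator k
  have := D.firstSeparator_lt_groupEnd k
  have := D.groupEnd_lt_groupStart_succ k
  have := groupStart_succ k
  set x := firstSeparator k - 1
  have x_lt_fx := h.add_le_apply_add (x := x) (by omega) (by omega)
  have fx_ne : firstSeparator k ≠ f x := by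
    rw [← D.separator_zero, ← D.markerPos_separator k (Nat.zero_le 8)]
    intro fx_eq
    exact D.notMem_range_markerPos_of_mem_firstGap (k := k) (by omega) (by omega)
      ((apply_mem_range_markerPos_iff h hi hij (by omega) (by omega)).1 ⟨_, fx_eq⟩)
  refine (D.lt_markerCount_iff.2 ?_).ne'
  exact (D.markerPos_separator k (Nat.zero_le 8)).trans_lt (by rw [separator_zero]; omega)

theorem IsBad.not_groupEnd_le {L : ℕ} (hD : D.IsBad L) (hj : level j ≤ L)
    (hk : level i = k) : ¬ D.groupEnd k ≤ 2 * i := by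
  intro hk'
  have i_le := hk ▸ le_groupStart_level i
  have k_le : k ≤ level j := hk ▸ level_mono hij.le
  have := groupStart_add_le_firstSeparator k
  have := D.firstSeparator_lt_groupEnd k
  have count_j_add_le : D.markerCount j + 18 ≤ D.markerCount (f (groupStart k + 18)) := by
    have := D.monotone_markerCount (h.ge (groupStart k) (by omega) (by omega))
    have := D.markerCount_groupStart (k := k)
    have := D.markerCount_groupStart_add (k := k) le_rfl
    have := markerCount_add_le h hi hij (x := groupStart k) (y := groupStart k + 18)
      (by omega) (by omega) (by omega)
    omega
  rcases hD.aligned_or_straddling h hi hij hj (by omega) hk' le_rfl (by omega) le_rfl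
    (D.groupEnd_lt_groupStart_succ k) with ⟨l, l_le, le_l, hl⟩ | ⟨l, -, hl₁, hl₂⟩
  · rcases le_l.lt_or_eq with hlt | heq
    · obtain rfl : l = k := by omega
      exact markerCount_apply_groupRun_ne h hi hij i_le (by omega) hl
    · have : 111 + 27 * l < D.markerCount j := by
        rw [lt_markerCount_iff, markerPos_groupStart, ← lt_level_iff, heq]
        exact l.lt_succ_self
      omega
  · have j_le : j ≤ groupStart l + 9 := by
      rw [← D.markerPos_groupRun l (by norm_num), ← markerCount_le_iff]
      omega
    have := D.monotone_markerCount (show f (D.groupEnd k) ≤ groupStart (l + 1) + 17 by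
      have := h.le (D.groupEnd k) (by omega) hk'
      rw [groupStart_succ]
      omega)
    rw [D.markerCount_groupStart_add (by norm_num)] at this
    omega

theorem not_straddling (hk : groupStart k < i) (hk' : i < firstSeparator k) (hl : level j = l + 1)
    (hl₁ : D.markerCount (f (firstSeparator k - 1)) ≤ 111 + 27 * l + 27) :
    D.markerCount (f (groupStart (k + 1) - 1)) < 111 + 27 * (l + 1) + 18 := by
  by_contra! hl₂
  have := groupStart_add_le_firstSeparator k
  have := D.firstSeparator_lt_groupEnd k
  have := D.groupEnd_lt_groupStart_succ k
  have := groupStart_succ k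
  have lt_count {r : ℕ} (hr : r < 18) (hr' : groupStart (k + 1) + r ≤ 2 * i) :
      111 + 27 * (l + 1) + 18 + r < D.markerCount (2 * j + 1) := by
    have := D.markerCount_eq_of_mem_lastGap (k := k) (x := groupStart (k + 1) - 1)
      (by omega) (by omega)
    have := markerCount_add_le_of_window h hi hij (x := groupStart (k + 1) - 1)
      (by omega) (by omega) hr'
    rw [add_assoc _ r 1, D.markerCount_groupStart_add (by omega)] at this
    omega
  rcases lt_or_ge i (groupStart k + 9) with i_lt | le_i
  · have j_le : j ≤ groupStart l + 17 := by
      obtain ⟨s, rfl⟩ := Nat.exists_eq_add_of_le hk.le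
      have := D.markerCount_groupStart_add (k := k) (r := s) (by omega)
      have := D.markerCount_eq_of_mem_firstGap (k := k) (x := firstSeparator k - 1)
        (by omega) (by omega)
      have := markerCount_add_le h hi hij le_rfl (y := firstSeparator k - 1) (by omega) (by omega)
      have := D.monotone_markerCount (h.ge _ le_rfl (by omega))
      rw [← D.markerPos_groupRun l (by norm_num), ← markerCount_le_iff]
      omega
    have := D.monotone_markerCount (show 2 * j + 1 ≤ firstSeparator (l + 1) by
      have := groupStart_add_le_firstSeparator (l + 1)
      rw [groupStart_succ] at this
      omega)
    rw [D.markerCount_eq_of_mem_firstGap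
      (by have := groupStart_add_le_firstSeparator (l + 1); omega) le_rfl] at this
    have := lt_count (r := 0) (by norm_num) (by omega)
    omega
  · have := D.monotone_markerCount (show 2 * j + 1 ≤ groupStart (l + 2) by
      have := hl ▸ le_groupStart_level j
      rw [groupStart_succ]
      omega)
    rw [markerCount_groupStart] at this
    have := lt_count (r := 17) (by norm_num) (by omega)
    omega

theorem IsBad.not_lt_firstSeparator {L : ℕ} (hD : D.IsBad L) (hj : level j ≤ L)
    (hk : level i = k + 1) : ¬ i < firstSeparator k := by
  intro i_lt
  have lt_i : groupStart k < i := lt_level_iff.1 (by omega)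
  have k_lt : k + 1 ≤ level j := hk ▸ level_mono hij.le
  have := groupStart_add_le_firstSeparator k
  have := D.groupEnd_lt_groupStart_succ k
  have := groupStart_succ k
  rcases hD.aligned_or_straddling h hi hij hj (k := k) (x₁ := firstSeparator k - 1)
    (x₂ := groupStart (k + 1) - 1) (by omega) (by omega) (by omega) (by omega) (by omega) (by omega)
    with ⟨l, l_le, le_l, aligned⟩ | ⟨l, hl, hl₁, hl₂⟩
  · obtain rfl : l = k := by omega
    exact markerCount_apply_firstGap_ne h hi hij lt_i i_lt aligned
  · exact hl₂.not_gt (not_straddling h hi hij lt_i i_lt hl hl₁)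

theorem lt_left_of_level_eq_zero (hj : level j = 0) : 221 < i := by
  by_contra! i_le
  have j_le : j ≤ 240 := groupStart_zero ▸ level_le_iff.1 hj.le
  have lt_E : 378 ≤ firstSeparator 0 := groupStart_add_le_firstSeparator 0
  have count_i := D.markerCount_of_le (x := i) (by omega) (by omega)
  have count_j := D.markerCount_of_le (x := j) (by omega) (by omega)
  have count_258 := D.markerCount_of_le (x := 258) (by omega) le_rfl
  have count_fi := D.monotone_markerCount (h.ge i le_rfl (by omega))
  have count_f258 := markerCount_add_le h hi hij le_rfl (y := 258) (by omega) (by omega)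
  obtain ⟨l, c, l_le, -, hc, hl⟩ := exists_markerCount_apply_eq h hi hij (x := 258)
    (by omega) (by omega)
    (D.notMem_range_markerPos_of_mem_firstGap (k := 0) (by rw [groupStart_zero]) (by omega))
  have f258_gt : firstSeparator 0 < f 258 := by
    rw [← D.separator_zero, ← D.markerPos_separator 0 (Nat.zero_le 8), ← lt_markerCount_iff]
    omega
  have := h.add_le_add (x := 258) (y := 2 * i) (by omega) (by omega) le_rfl
  have := h.le (2 * i) (by omega) le_rfl
  omega

end Embedding

theorem markerCount_window_le (hj : level j = l + 1) :
    D.markerCount (2 * j + 1) ≤ D.markerCount j + 36 := by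
  have lt_j : groupStart l < j := lt_level_iff.1 (by omega)
  have j_le := hj ▸ le_groupStart_level j
  have succ_l := groupStart_succ l
  have succ_l' : groupStart (l + 2) = 2 * groupStart (l + 1) + 1 := groupStart_succ (l + 1)
  rcases lt_or_ge (groupStart l + 17) j with lt_j' | j_le'
  · have := D.monotone_markerCount (show groupStart l + 18 ≤ j from lt_j')
    have := D.markerCount_groupStart_add (k := l) (r := 18) le_rfl
    have := D.monotone_markerCount (show 2 * j + 1 ≤ groupStart (l + 2) by omega)
    have := D.markerCount_groupStart (k := l + 2)
    omega
  rcases lt_or_ge (groupStart l + 9) j with lt_j' | j_le''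
  · have := D.monotone_markerCount (show groupStart l + 10 ≤ j from lt_j')
    have := D.markerCount_groupStart_add (k := l) (r := 10) (by norm_num)
    have := groupStart_add_le_firstSeparator (l + 1)
    have := D.monotone_markerCount (show 2 * j + 1 ≤ firstSeparator (l + 1) by omega)
    have := D.markerCount_eq_of_mem_firstGap (k := l + 1) (by omega) le_rfl
    omega
  · obtain ⟨s, rfl⟩ := Nat.exists_eq_add_of_le lt_j.le
    have := D.markerCount_groupStart_add (k := l) (r := s) (by omega)
    have := D.markerCount_groupStart_add (k := l + 1) (r := 2 * s) (by omega)
    rw [show 2 * (groupStart l + s) + 1 = groupStart (l + 1) + 2 * s by omega]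
    omega

include h hi hij

theorem lt_left_of_isWindowEmbedding : 221 < i := by
  rcases hj : level j with _ | l
  · exact lt_left_of_level_eq_zero h hi hij hj
  · by_contra! i_le
    have := markerCount_window_ge h hi hij (x := 257) (by omega) (by omega)
    have := D.markerCount_of_le (x := 257 + 1) (by norm_num) le_rfl
    have := D.markerCount_of_le (x := i) hi (by omega)
    have := markerCount_window_le (D := D) hj
    omega

theorem IsBad.groupStart_lt_right_of_isWindowEmbedding {L : ℕ} (hD : D.IsBad L) :
    groupStart L < j := by
  by_contra! j_le
  have hj : level j ≤ L := level_le_iff.2 j_le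
  have not_groupEnd_le := hD.not_groupEnd_le h hi hij hj rfl
  rcases hk : level i with _ | k
  · have := lt_left_of_isWindowEmbedding h hi hij
    have := D.groupEnd_zero_le
    rw [hk] at not_groupEnd_le
    omega
  · have := hD.not_lt_firstSeparator h hi hij hj hk
    have := D.groupEnd_succ_le k
    rw [hk] at not_groupEnd_le
    omega

end ControlledDigits

/-! ### Windows starting in the opening -/

/-- The first `256` letters of the word: the opening and the markers that follow it. -/
def extendedOpening : List (Fin 3) := opening ++ List.replicate 128 2

theorem not_sublist_extendedOpening_of_lt_64 :
    ∀ j < 64, ∀ i < j, 1 ≤ i →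
      ¬ (friedmanBlock extendedOpening i).Sublist (friedmanBlock extendedOpening j) := by
  decide +kernel

theorem not_sublist_drop_extendedOpening :
    ∀ i < 64, 1 ≤ i → ¬ (friedmanBlock extendedOpening i).Sublist (extendedOpening.drop 63) := by
  decide +kernel

theorem zero_mem_friedmanBlock_extendedOpening :
    ∀ i < 64, 1 ≤ i → 0 ∈ friedmanBlock extendedOpening i := by
  decide +kernel

namespace ControlledDigits

variable {D : ControlledDigits} {i j : ℕ}

theorem map_letter_range' : (List.range' 1 256).map D.letter = extendedOpening := by
  rw [← List.range'_append_1 (m := 128) (n := 128), List.map_append, extendedOpening]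
  refine congrArg₂ _ rfl ?_
  simp only [List.eq_replicate_iff, List.length_map, List.length_range', true_and,
    List.forall_mem_map, List.mem_range'_1]
  intro x hx
  rw [D.letter_eq_two_iff (by omega)]
  exact ⟨x - 129, by rw [D.markerPos_of_le] <;> omega⟩

theorem window_letter_eq (hi : 1 ≤ i) (hi' : i ≤ 128) :
    window D.letter i = friedmanBlock extendedOpening i := by
  rw [← map_letter_range' (D := D), friedmanBlock_map_range' hi (by omega)]

theorem letter_128 : D.letter 128 = 0 := if_pos le_rfl

theorem zero_notMem_window (hj : 128 < j) : 0 ∉ window D.letter j := by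
  rw [mem_window]
  rintro ⟨x, hx, -, letter_eq⟩
  exact D.letter_ne_zero (hj.trans_le hx) letter_eq

theorem not_window_sublist_of_lt_64 (hi : 1 ≤ i) (hi' : i < 64) (hij : i < j) :
    ¬ (window D.letter i).Sublist (window D.letter j) := by
  intro sublist
  rcases lt_or_ge 128 j with hj | hj
  · refine zero_notMem_window hj (sublist.subset ?_)
    rw [window_letter_eq hi (by omega)]
    exact zero_mem_friedmanBlock_extendedOpening i hi' hi
  rw [window_letter_eq hi (by omega), window_letter_eq (by omega) hj] at sublist
  rcases lt_or_ge j 64 with hj' | hj'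
  · exact not_sublist_extendedOpening_of_lt_64 j hj' i hij hi sublist
  · exact not_sublist_drop_extendedOpening i hi' hi (sublist.trans
      ((List.take_sublist _ _).trans (List.drop_sublist_drop_left _ (by omega))))

theorem not_isWindowEmbedding_of_le_128 {f : ℕ → ℕ} (hi : 64 ≤ i) (hi' : i ≤ 128) (hij : i < j) :
    ¬ IsWindowEmbedding D.letter i j f := by
  intro h
  have := h.add_le_apply_add hi' (by omega)
  exact D.letter_ne_zero (by omega) ((h.apply_eq 128 hi' (by omega)).trans letter_128)

theorem IsBad.satisfiesStar {L : ℕ} (hD : D.IsBad L) :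
    SatisfiesStar ((List.range' 1 (2 * groupStart L)).map D.letter) := by
  intro i j hi hij hj sublist
  rw [List.length_map, List.length_range'] at hj
  rw [friedmanBlock_map_range' hi (by omega), friedmanBlock_map_range' (by omega) hj] at sublist
  rcases lt_or_ge i 64 with hi' | hi'
  · exact not_window_sublist_of_lt_64 hi hi' hij sublist
  obtain ⟨f, h⟩ := exists_isWindowEmbedding sublist
  rcases le_or_gt i 128 with hi' | hi'
  · exact not_isWindowEmbedding_of_le_128 ‹_› hi' hij h
  · have := hD.groupStart_lt_right_of_isWindowEmbedding h hi' hij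
    omega

end ControlledDigits

theorem IsControlledBad.exists_isBad {v : ℕ → Fin 8 → ℕ} {N : ℕ} (hv : IsControlledBad v 5 N) :
    ∃ D : ControlledDigits, D.IsBad (N - 6) := by
  refine ⟨⟨fun k c => v (k + 5) (Fin.ofNat 8 c), fun k c => ?_⟩, fun k l hkl hl => ?_⟩
  · exact Nat.lt_succ_iff.1 (hv.lt (k + 5) (by omega) _)
  · have not_vector_le := hv.not_le (k + 5) (l + 5) (by omega) (by omega) (by omega)
    simp only [Pi.le_def, not_forall] at not_vector_le
    obtain ⟨c, hc⟩ := not_vector_le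
    exact ⟨c, c.isLt, by simpa using hc⟩

/-- n(3) > A(7,184): there is a word over a three-letter alphabet of length
greater than `A(7,184)` satisfying (*). -/
theorem friedman_n3_gt_A7_184 :
    ∃ s : List (Fin 3), SatisfiesStar s ∧ ackF 7 184 < s.length := by
  obtain ⟨v, hv⟩ := exists_isControlledBad 8 (K := 5) (by norm_num)
  obtain ⟨D, hD⟩ := hv.exists_isBad
  refine ⟨_, hD.satisfiesStar, ?_⟩
  have := ackF_seven_le_fastGrowing_eight
  have := add_le_groupStart (fastGrowing (ofNat 8) 5 - 6)
  rw [List.length_map, List.length_range']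
  omega
end

section
/- n(4) > A^{(A(187196))}(1), where A(k) := A(k,k) is the diagonal one-argument Ackermann function and A^{(n)}(1) denotes its n-fold iterate applied to 1 (that is, A^{(1)}(1) = A(1) and A^{(n)}(1) = A(A^{(n−1)}(1))): there exists a word over a four-letter alphabet of length greater than A^{(A(187196))}(1) satisfying property (*). -/
/-- The diagonal one-argument Ackermann function `A(k) = A(k,k)`. -/
def ackDiag (k : ℕ) : ℕ := ackF k k

/-!
Put a marker letter at positions whose distances double every three steps. Then every late block
contains exactly three markers, and hence two complete segments between consecutive markers; an
embedding of one late block into another matches the markers, so it embeds both segments. The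
segments code, alternately, the two components of the states of a lexicographic descent, and the
code is such that an embedding of codes of lists of the same length forces a lexicographic
inequality between the lists. Therefore no late block embeds into a later one. The early blocks all
contain a letter that does not occur in the late ones, and among themselves they are checked by
computation.

The word is thus as long as the descent. Entries chosen at time `t` may be as large as `t + 1`, so
the descent through lists of length `s + 1` takes time at least the `s`-th level of the Ackermann
hierarchy, and a phase, whose fast component begun at time `t` may have length `t + 1`, lasts at
least until time `A(t)`. Counting the slow component down from `[1, 2]` to `[1, 0]` takes two phases
and ends at a time `u ≥ A(187196)`; then `[0, u + 1]` allows another `u + 1` phases.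
-/

namespace Friedman

open List

section Coding

variable {α : Type*} {sep pad x : α} {m m' : List ℕ} {n n' t : ℕ}

theorem sublist_and_sublist_of_append_cons [DecidableEq α] {l₁ l₂ r₁ r₂ : List α}
    (h : l₁ ++ x :: l₂ <+ r₁ ++ x :: r₂) (hr₁ : x ∉ r₁) (hcount : r₂.count x ≤ l₂.count x) :
    l₁ <+ r₁ ∧ l₂ <+ r₂ := by
  induction r₁ generalizing l₁ with
  | nil =>
    rcases l₁ with _ | ⟨a, l₁⟩
    · exact ⟨nil_sublist _, cons_sublist_cons.1 h⟩
    · have hcount' : (l₁ ++ x :: l₂).count x ≤ r₂.count x := (Sublist.tail h).count_le x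
      simp only [count_append, count_cons_self] at hcount'
      omega
  | cons b r₁ ih =>
    obtain ⟨hxb, hr₁⟩ : x ≠ b ∧ x ∉ r₁ := by simpa using hr₁
    rcases l₁ with _ | ⟨a, l₁⟩
    · exact ⟨nil_sublist _, (ih (l₁ := []) (h.of_cons_of_ne hxb) hr₁).2⟩
    · cases h with
      | cons _ h => exact (ih h hr₁).imp (Sublist.cons b) id
      | cons_cons _ h => exact (ih h hr₁).imp (Sublist.cons_cons b) id

/-- The unary code `pad^{v₁} sep pad^{v₂} sep … pad^{v_k} sep` of a list `[v₁, …, v_k]`. -/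
def unaryCode (sep pad : α) (m : List ℕ) : List α :=
  m.flatMap fun v ↦ replicate v pad ++ [sep]

/-- The unary code of `m`, filled up with `pad` to length `n` (and left as it is if it is already
longer than that). -/
def paddedCode (sep pad : α) (n : ℕ) (m : List ℕ) : List α :=
  (unaryCode sep pad m).rightpad n pad

theorem unaryCode_cons (v : ℕ) (m : List ℕ) :
    unaryCode sep pad (v :: m) = replicate v pad ++ sep :: unaryCode sep pad m := by
  simp [unaryCode]

theorem length_unaryCode (m : List ℕ) : (unaryCode sep pad m).length = m.sum + m.length := by
  induction m with
  | nil => rfl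
  | cons v m ih =>
    simp only [unaryCode_cons, length_append, length_replicate, length_cons, sum_cons]
    omega

theorem length_unaryCode_le (hlength : m.length ≤ t) (hm : ∀ e ∈ m, e ≤ t) :
    (unaryCode sep pad m).length ≤ t * (t + 1) :=
  calc (unaryCode sep pad m).length = m.sum + m.length := length_unaryCode m
    _ ≤ m.length * t + m.length := by gcongr; exact m.sum_le_card_nsmul t hm
    _ ≤ t * t + t := by gcongr
    _ = t * (t + 1) := by ring

theorem length_paddedCode (hn : (unaryCode sep pad m).length ≤ n) :
    (paddedCode sep pad n m).length = n := by
  simp [paddedCode, hn]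

theorem pad_mem_paddedCode (hn : (unaryCode sep pad m).length < n) :
    pad ∈ paddedCode sep pad n m :=
  mem_append_right _ (mem_replicate.2 ⟨by omega, rfl⟩)

theorem eq_or_eq_of_mem_paddedCode (hx : x ∈ paddedCode sep pad n m) : x = sep ∨ x = pad := by
  simp only [paddedCode, rightpad, unaryCode, mem_append, mem_flatMap, mem_replicate,
    mem_singleton] at hx
  tauto

theorem count_unaryCode [DecidableEq α] (h : pad ≠ sep) (m : List ℕ) :
    (unaryCode sep pad m).count sep = m.length := by
  induction m with
  | nil => rfl
  | cons v m ih => simp [unaryCode_cons, count_replicate, h, ih]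

theorem count_paddedCode [DecidableEq α] (h : pad ≠ sep) (n : ℕ) (m : List ℕ) :
    (paddedCode sep pad n m).count sep = m.length := by
  simp [paddedCode, rightpad, count_replicate, h, count_unaryCode h]

theorem le_of_unaryCode_append_sublist (h : pad ≠ sep) (hlength : m.length = m'.length)
    (hsub : unaryCode sep pad m ++ replicate n pad <+ unaryCode sep pad m' ++ replicate n' pad) :
    m ≤ m' := by
  classical
  induction m generalizing m' with
  | nil => exact (length_eq_zero_iff.1 hlength.symm).ge
  | cons v m ih =>
    obtain _ | ⟨v', m'⟩ := m'
    · simp at hlength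
    replace hlength : m.length = m'.length := by simpa using hlength
    simp only [unaryCode_cons, append_assoc, cons_append] at hsub
    obtain ⟨hhead, htail⟩ := sublist_and_sublist_of_append_cons hsub
      (by simp [h.symm]) (by simp [count_unaryCode h, count_replicate, h, hlength])
    have hv : v ≤ v' := by simpa using hhead.length_le
    obtain hlt | rfl := hv.lt_or_eq
    · exact le_of_lt (Lex.rel hlt)
    · exact cons_le_cons v (ih hlength htail)

theorem le_of_paddedCode_sublist (h : pad ≠ sep) (hlength : m.length = m'.length)
    (hsub : paddedCode sep pad n m <+ paddedCode sep pad n' m') : m ≤ m' :=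
  le_of_unaryCode_append_sublist h hlength hsub

end Coding

section Runs

/-- A state of the descent: a slow component, and a fast component that is `none` in the moment
between two phases. Within a phase the slow component is constant and the fast one decreases
lexicographically at constant length; between two phases the slow component decreases
lexicographically and the fast one is chosen afresh. -/
structure State where
  /-- The component that decreases once per phase. -/
  slow : List ℕ
  /-- The component that decreases within a phase. -/
  fast : Option (List ℕ)

/-- The transitions of the descent between the times `t` and `t + 1`; every entry that is newly
chosen, and the length of a newly chosen list, is at most `t + 1`. -/
inductive Step (t : ℕ) : State → State → Prop
  | descend (p pre : List ℕ) (v : ℕ) (rest rest' : List ℕ) (hlength : rest'.length = rest.length)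
      (hrest' : ∀ e ∈ rest', e ≤ t + 1) :
      Step t ⟨p, some (pre ++ (v + 1) :: rest)⟩ ⟨p, some (pre ++ v :: rest')⟩
  | halt (p m : List ℕ) : Step t ⟨p, some m⟩ ⟨p, none⟩
  | restart (p p' m : List ℕ) (hlt : p' < p) (hlength : p'.length = 2) (hp' : ∀ e ∈ p', e ≤ t + 1)
      (three_le : 3 ≤ m.length) (length_le : m.length ≤ t + 1) (hm : ∀ e ∈ m, e ≤ t + 1) :
      Step t ⟨p, none⟩ ⟨p', some m⟩

namespace State

/-- The size bounds on a state at time `t`. The slow component has length `2` and the fast one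
length at least `3`, so that their codes differ in the number of separators. -/
structure Valid (t : ℕ) (σ : State) : Prop where
  length_slow : σ.slow.length = 2
  slow_le : ∀ e ∈ σ.slow, e ≤ t
  three_le_length_fast : ∀ m ∈ σ.fast, 3 ≤ m.length
  length_fast_le : ∀ m ∈ σ.fast, m.length ≤ t
  fast_le : ∀ m ∈ σ.fast, ∀ e ∈ m, e ≤ t

/-- The transitive relation between an earlier and a later state of the descent: either the slow
component has decreased, or both states belong to the same phase and the fast component has
decreased, where `none` counts as the end of the phase. -/
def Precedes (σ σ' : State) : Prop :=
  σ'.slow < σ.slow ∨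
    σ'.slow = σ.slow ∧ ∃ m ∈ σ.fast, ∀ m' ∈ σ'.fast, m'.length = m.length ∧ m' < m

/-- The word of length `n` coding the slow component. -/
def slowWord (n : ℕ) (σ : State) : List (Fin 4) := paddedCode 0 2 n σ.slow

/-- The word of length `n` coding the fast component. The code `0ⁿ` of `none` contains no padding
letter `2`, and it has more letters `0` than the code of any list of length less than `n`. -/
def fastWord (n : ℕ) (σ : State) : List (Fin 4) :=
  σ.fast.elim (replicate n 0) (paddedCode 0 2 n)

variable {σ σ' σ'' : State} {t t' n n' : ℕ}

theorem Valid.step (h : σ.Valid t) (hstep : Step t σ σ') : σ'.Valid (t + 1) := by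
  obtain ⟨hslow, hslow_le, hthree, hfast, hfast_le⟩ := h
  cases hstep with
  | descend p pre v rest rest' hlength hrest' =>
    simp only [Option.mem_some_iff, forall_eq', length_append, length_cons] at hthree hfast
    refine ⟨hslow, fun e he ↦ (hslow_le e he).trans t.le_succ, ?_, ?_, ?_⟩
    · simpa [hlength] using hthree
    · simpa [hlength] using hfast.trans t.le_succ
    · simp only [Option.mem_some_iff, forall_eq', forall_mem_append, forall_mem_cons]
        at hfast_le ⊢
      obtain ⟨hpre, hv, -⟩ := hfast_le
      exact ⟨fun e he ↦ (hpre e he).trans t.le_succ, by omega, hrest'⟩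
  | halt p m =>
    exact ⟨hslow, fun e he ↦ (hslow_le e he).trans t.le_succ, by simp, by simp, by simp⟩
  | restart p p' m hlt hlength hp' three_le length_le hm =>
    exact ⟨hlength, hp', by simpa, by simpa, by simpa⟩

theorem Precedes.trans (h : σ.Precedes σ') (h' : σ'.Precedes σ'') : σ.Precedes σ'' := by
  rcases h with h | ⟨hslow, m, hm, hfast⟩ <;> rcases h' with h' | ⟨hslow', m', hm', hfast'⟩
  · exact .inl (h'.trans h)
  · exact .inl (hslow' ▸ h)
  · exact .inl (hslow ▸ h')
  · refine .inr ⟨hslow'.trans hslow, m, hm, fun m'' hm'' ↦ ?_⟩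
    obtain ⟨hlength, hlt⟩ := hfast m' hm'
    obtain ⟨hlength', hlt'⟩ := hfast' m'' hm''
    exact ⟨hlength'.trans hlength, hlt'.trans hlt⟩

theorem Precedes.slow_le (h : σ.Precedes σ') : σ'.slow ≤ σ.slow :=
  h.elim le_of_lt fun h ↦ h.1.le

theorem Precedes.fast_of_slow_eq (h : σ.Precedes σ') (hslow : σ'.slow = σ.slow) :
    ∃ m ∈ σ.fast, ∀ m' ∈ σ'.fast, m'.length = m.length ∧ m' < m :=
  h.elim (fun h ↦ absurd hslow h.ne) And.right

theorem fastWord_of_mem {m : List ℕ} (hm : m ∈ σ.fast) :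
    σ.fastWord n = paddedCode 0 2 n m := by
  simp [fastWord, Option.mem_def.1 hm]

theorem fastWord_of_eq_none (h : σ.fast = none) : σ.fastWord n = replicate n 0 := by
  simp [fastWord, h]

theorem eq_zero_or_eq_two_of_mem_slowWord {x : Fin 4} (hx : x ∈ σ.slowWord n) : x = 0 ∨ x = 2 :=
  eq_or_eq_of_mem_paddedCode hx

theorem eq_zero_or_eq_two_of_mem_fastWord {x : Fin 4} (hx : x ∈ σ.fastWord n) :
    x = 0 ∨ x = 2 := by
  rcases hfast : σ.fast with _ | m
  · rw [fastWord_of_eq_none hfast] at hx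
    exact .inl (eq_of_mem_replicate hx)
  · rw [fastWord_of_mem hfast] at hx
    exact eq_or_eq_of_mem_paddedCode hx

namespace Valid

theorem length_code_fast_lt (h : σ.Valid t) (hn : t * (t + 1) < n) {m : List ℕ}
    (hm : m ∈ σ.fast) : (unaryCode (0 : Fin 4) 2 m).length < n :=
  (length_unaryCode_le (h.length_fast_le m hm) (h.fast_le m hm)).trans_lt hn

theorem length_slowWord (h : σ.Valid t) (ht : 2 ≤ t) (hn : t * (t + 1) < n) :
    (σ.slowWord n).length = n :=
  length_paddedCode ((length_unaryCode_le (h.length_slow.trans_le ht) h.slow_le).trans hn.le)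

theorem length_fastWord (h : σ.Valid t) (hn : t * (t + 1) < n) : (σ.fastWord n).length = n := by
  rcases hfast : σ.fast with _ | m
  · rw [fastWord_of_eq_none hfast, length_replicate]
  · rw [fastWord_of_mem hfast]
    exact length_paddedCode (h.length_code_fast_lt hn hfast).le

theorem not_fastWord_sublist_slowWord (h : σ.Valid t) (hn : 3 ≤ n) (h' : σ'.Valid t') :
    ¬ σ.fastWord n <+ σ'.slowWord n' := by
  intro hsub
  have hcount : (σ.fastWord n).count 0 ≤ 2 := by
    simpa [slowWord, count_paddedCode, h'.length_slow] using hsub.count_le 0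
  rcases hfast : σ.fast with _ | m
  · rw [fastWord_of_eq_none hfast, count_replicate_self] at hcount
    omega
  · rw [fastWord_of_mem hfast, count_paddedCode (by decide)] at hcount
    have := h.three_le_length_fast m hfast
    omega

theorem slow_le_of_slowWord_sublist (h : σ.Valid t) (h' : σ'.Valid t')
    (hsub : σ.slowWord n <+ σ'.slowWord n') : σ.slow ≤ σ'.slow :=
  le_of_paddedCode_sublist (by decide) (h.length_slow.trans h'.length_slow.symm) hsub

theorem not_fastWord_sublist_fastWord (h : σ.Valid t) (hn : t * (t + 1) < n)
    (hprec : σ.Precedes σ') (hslow : σ'.slow = σ.slow) : ¬ σ.fastWord n <+ σ'.fastWord n' := by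
  intro hsub
  obtain ⟨m, hm, hdesc⟩ := hprec.fast_of_slow_eq hslow
  rw [fastWord_of_mem hm] at hsub
  rcases hfast' : σ'.fast with _ | m'
  · rw [fastWord_of_eq_none hfast'] at hsub
    have htwo := hsub.subset (pad_mem_paddedCode (h.length_code_fast_lt hn hm))
    exact absurd (eq_of_mem_replicate htwo) (by decide)
  · rw [fastWord_of_mem hfast'] at hsub
    obtain ⟨hlength, hlt⟩ := hdesc m' hfast'
    exact (le_of_paddedCode_sublist (by decide) hlength.symm hsub).not_gt hlt

end Valid

end State

variable {σ σ' : State} {st : ℕ → State} {t t' k k' n n' N : ℕ}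

theorem append_cons_lt_append_succ_cons (pre : List ℕ) (v : ℕ) (rest rest' : List ℕ) :
    pre ++ v :: rest' < pre ++ (v + 1) :: rest :=
  append_left_lt (Lex.rel v.lt_succ_self)

theorem Step.precedes (h : Step t σ σ') : σ.Precedes σ' := by
  cases h with
  | descend p pre v rest rest' hlength hrest' =>
    refine .inr ⟨rfl, _, rfl, ?_⟩
    rintro _ ⟨⟩
    exact ⟨by simp [hlength], append_cons_lt_append_succ_cons pre v rest rest'⟩
  | halt p m => exact .inr ⟨rfl, m, rfl, by simp⟩
  | restart p p' m hlt => exact .inl hlt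

theorem Step.slow_eq_iff (h : Step t σ σ') : σ'.slow = σ.slow ↔ σ.fast ≠ none := by
  cases h with
  | descend => simp
  | halt => simp
  | restart p p' m hlt => simpa using hlt.ne

/-- A run of the descent through the times `2, …, N`. -/
structure IsRun (st : ℕ → State) (N : ℕ) : Prop where
  two_le : 2 ≤ N
  valid_start : (st 2).Valid 2
  step : ∀ t, 2 ≤ t → t < N → Step t (st t) (st (t + 1))

namespace IsRun

theorem valid (h : IsRun st N) (ht : 2 ≤ t) (htN : t ≤ N) : (st t).Valid t := by
  induction t, ht using Nat.le_induction with
  | base => exact h.valid_start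
  | succ t ht ih => exact (ih (by omega)).step (h.step t ht htN)

theorem precedes (h : IsRun st N) (ht : 2 ≤ t) (htt' : t < t') (ht'N : t' ≤ N) :
    (st t).Precedes (st t') := by
  induction t', htt' using Nat.le_induction with
  | base => exact (h.step t ht ht'N).precedes
  | succ u hu ih => exact (ih (by omega)).trans (h.step u (by omega) ht'N).precedes

theorem slow_le_slow (h : IsRun st N) (ht : 2 ≤ t) (htt' : t ≤ t') (ht'N : t' ≤ N) :
    (st t').slow ≤ (st t).slow := by
  obtain rfl | htt' := htt'.eq_or_lt
  · exact le_rfl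
  · exact (h.precedes ht htt' ht'N).slow_le

theorem length_fast_le_of_slow_eq (h : IsRun st N) (ht : 2 ≤ t) (htt' : t ≤ t') (ht'N : t' ≤ N)
    (hslow : (st t').slow = (st t).slow) {m' : List ℕ} (hm' : m' ∈ (st t').fast) :
    m'.length ≤ t := by
  obtain rfl | htt' := htt'.eq_or_lt
  · exact (h.valid ht ht'N).length_fast_le m' hm'
  · obtain ⟨m, hm, hdesc⟩ := (h.precedes ht htt' ht'N).fast_of_slow_eq hslow
    exact (hdesc m' hm').1.trans_le ((h.valid ht (by omega)).length_fast_le m hm)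

theorem not_slowWord_sublist_and_fastWord_sublist (h : IsRun st N) (ht : 2 ≤ t) (htt' : t < t')
    (ht'N : t' ≤ N) (hn : t * (t + 1) < n) :
    ¬ ((st t).slowWord k <+ (st t').slowWord k' ∧ (st t).fastWord n <+ (st t').fastWord n') := by
  rintro ⟨hslow, hfast⟩
  have hvalid := h.valid ht (by omega)
  have hprec := h.precedes ht htt' ht'N
  have hle := hvalid.slow_le_of_slowWord_sublist (h.valid (by omega) ht'N) hslow
  exact hvalid.not_fastWord_sublist_fastWord hn hprec (hprec.slow_le.antisymm hle) hfast

-- If a new phase begins at time `t + 1`, the first fast word is `0ⁿ`, whereas the fast list at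
-- time `t'` still has the length, at most `t + 1`, that was chosen at the start of this phase.
theorem not_fastWord_sublist_and_slowWord_succ_sublist (h : IsRun st N) (ht : 2 ≤ t)
    (htt' : t < t') (ht'N : t' < N) (hn : t * (t + 1) < n) :
    ¬ ((st t).fastWord n <+ (st t').fastWord n' ∧
      (st (t + 1)).slowWord k <+ (st (t' + 1)).slowWord k') := by
  rintro ⟨hfast, hslow⟩
  have hle : (st (t + 1)).slow ≤ (st (t' + 1)).slow :=
    (h.valid (by omega) (by omega)).slow_le_of_slowWord_sublist (h.valid (by omega) ht'N) hslow
  have hslow_t' : (st t').slow = (st (t + 1)).slow :=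
    (h.slow_le_slow (by omega) htt' ht'N.le).antisymm
      (hle.trans (h.slow_le_slow (by omega) t'.le_succ ht'N))
  have hslow_succ_t' : (st (t' + 1)).slow = (st t').slow :=
    (h.slow_le_slow (by omega) t'.le_succ ht'N).antisymm (hslow_t'.trans_le hle)
  by_cases hphase : (st (t + 1)).slow = (st t).slow
  · exact (h.valid ht (by omega)).not_fastWord_sublist_fastWord hn
      (h.precedes ht htt' ht'N.le) (hslow_t'.trans hphase) hfast
  · have hnone : (st t).fast = none := by
      simpa [hphase] using (h.step t ht (by omega)).slow_eq_iff
    obtain ⟨m', hm'⟩ : ∃ m', (st t').fast = some m' :=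
      Option.ne_none_iff_exists'.1 ((h.step t' (by omega) ht'N).slow_eq_iff.1 hslow_succ_t')
    have hcount : n ≤ m'.length := by
      rw [State.fastWord_of_eq_none hnone, State.fastWord_of_mem hm'] at hfast
      simpa [count_paddedCode] using hfast.count_le 0
    have hlength := h.length_fast_le_of_slow_eq (by omega) htt' ht'N.le hslow_t' hm'
    nlinarith

end IsRun

end Runs

section Growth

/-- If a list `pre ++ (v + 1) :: 0ˢ` is reached at time `t`, then the descent that always chooses
the largest admissible entries reaches `pre ++ v :: 0ˢ` at time `descentTime s t`. -/
def descentTime : ℕ → ℕ → ℕ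
  | 0, t => t + 1
  | s + 1, t => (descentTime s)^[t + 1] (t + 1)

/-- The time at which a phase beginning at time `t` with the longest and largest admissible fast
component is over. -/
def phaseTime (t : ℕ) : ℕ := descentTime (t + 1) t + 1

theorem descentTime_succ (s t : ℕ) :
    descentTime (s + 1) t = (descentTime s)^[t + 1] (t + 1) := rfl

theorem lt_descentTime (s t : ℕ) : t < descentTime s t := by
  induction s generalizing t with
  | zero => exact t.lt_succ_self
  | succ s ih =>
    exact Function.id_le_iterate_of_id_le (fun u ↦ (ih u).le) (t + 1) (t + 1)

theorem id_le_descentTime (s : ℕ) : id ≤ descentTime s := fun t ↦ (lt_descentTime s t).le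

theorem descentTime_monotone (s : ℕ) : Monotone (descentTime s) := by
  induction s with
  | zero => exact fun t u htu ↦ Nat.succ_le_succ htu
  | succ s ih =>
    intro t u htu
    calc (descentTime s)^[t + 1] (t + 1) ≤ (descentTime s)^[t + 1] (u + 1) :=
          ih.iterate (t + 1) (by omega)
      _ ≤ (descentTime s)^[u + 1] (u + 1) :=
          Function.monotone_iterate_of_id_le (id_le_descentTime s) (by omega) (u + 1)

theorem descentTime_monotone_left (t : ℕ) : Monotone fun s ↦ descentTime s t := by
  refine monotone_nat_of_le_succ fun s ↦ ?_
  rw [descentTime_succ, Function.iterate_succ_apply']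
  refine descentTime_monotone s (t.le_succ.trans ?_)
  exact Function.id_le_iterate_of_id_le (id_le_descentTime s) t (t + 1)

theorem descentTime_one (t : ℕ) : descentTime 1 t = 2 * t + 2 := by
  have hzero : descentTime 0 = Nat.succ := rfl
  rw [descentTime_succ, hzero, Nat.succ_iterate]
  omega

theorem two_pow_mul_le_iterate_descentTime_one (n t : ℕ) :
    2 ^ n * t ≤ (descentTime 1)^[n] t := by
  induction n with
  | zero => simp
  | succ n ih =>
    rw [Function.iterate_succ_apply', descentTime_one, pow_succ', mul_assoc]
    omega

theorem ackF_le_iterate (s c : ℕ) (h : ∀ t, ackF (s + 1) t ≤ descentTime (s + 1) t) :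
    ackF (s + 2) c ≤ (descentTime (s + 1))^[c] 2 := by
  induction c with
  | zero => simp [ackF]
  | succ c ih =>
    obtain _ | c := c
    · simpa [ackF] using id_le_descentTime (s + 1) 2
    · rw [ackF, Function.iterate_succ_apply']
      exact (h _).trans (descentTime_monotone (s + 1) ih)

theorem ackF_le_descentTime (s t : ℕ) : ackF s t ≤ descentTime s t := by
  induction s generalizing t with
  | zero => simp [ackF]
  | succ s ih =>
    obtain _ | s := s
    · simp [ackF, descentTime_one]
    calc ackF (s + 2) t ≤ (descentTime (s + 1))^[t] 2 := ackF_le_iterate s t ih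
      _ ≤ (descentTime (s + 1))^[t] (descentTime (s + 1) (t + 1)) :=
          (descentTime_monotone (s + 1)).iterate t
            (le_trans (by omega) (lt_descentTime (s + 1) (t + 1)))
      _ = descentTime (s + 2) t := rfl

theorem lt_phaseTime (t : ℕ) : t < phaseTime t :=
  (lt_descentTime (t + 1) t).trans (Nat.lt_succ_self _)

theorem phaseTime_monotone : Monotone phaseTime := fun t u htu ↦
  Nat.succ_le_succ <| (descentTime_monotone_left t (Nat.succ_le_succ htu)).trans
    (descentTime_monotone (u + 1) htu)

theorem ackDiag_le_phaseTime : ackDiag ≤ phaseTime := fun t ↦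
  calc ackF t t ≤ descentTime t t := ackF_le_descentTime t t
    _ ≤ descentTime (t + 1) t := descentTime_monotone_left t t.le_succ
    _ ≤ phaseTime t := Nat.le_succ _

theorem le_phaseTime {t : ℕ} (ht : 2 ≤ t) : 187196 ≤ phaseTime t := by
  have hpow (u : ℕ) : 2 ^ (u + 1) * (u + 1) ≤ descentTime t u :=
    (two_pow_mul_le_iterate_descentTime_one (u + 1) (u + 1)).trans (descentTime_monotone_left u ht)
  have hinner : 63 ≤ descentTime t (t + 1) :=
    calc 63 ≤ 2 ^ (2 + 1 + 1) * (2 + 1 + 1) := by norm_num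
      _ ≤ 2 ^ (t + 1 + 1) * (t + 1 + 1) := by gcongr; norm_num
      _ ≤ descentTime t (t + 1) := hpow (t + 1)
  calc 187196 ≤ 2 ^ (63 + 1) * (63 + 1) := by norm_num
    _ ≤ descentTime t 63 := hpow 63
    _ ≤ (descentTime t)^[2] (t + 1) := descentTime_monotone t hinner
    _ ≤ (descentTime t)^[t + 1] (t + 1) :=
        Function.monotone_iterate_of_id_le (id_le_descentTime t) (by omega) (t + 1)
    _ ≤ phaseTime t := Nat.le_succ _

end Growth

section Reach

open Relation

/-- `Reach (t, σ) (t', σ')`: the descent can lead from the state `σ` at time `t` to the state `σ'`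
at time `t'`. -/
def Reach : ℕ × State → ℕ × State → Prop :=
  ReflTransGen fun a b ↦ b.1 = a.1 + 1 ∧ Step a.1 a.2 b.2

variable {p p' pre : List ℕ} {s t n x : ℕ}

theorem Reach.exists_path {a b : ℕ × State} (h : Reach a b) :
    a.1 ≤ b.1 ∧ ∃ st : ℕ → State, st a.1 = a.2 ∧ st b.1 = b.2 ∧
      ∀ t, a.1 ≤ t → t < b.1 → Step t (st t) (st (t + 1)) := by
  induction h with
  | refl => exact ⟨le_rfl, fun _ ↦ a.2, rfl, rfl, fun t hat hta ↦ absurd hat hta.not_ge⟩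
  | @tail b c _ hbc ih =>
    obtain ⟨hab, st, hsta, hstb, hstep⟩ := ih
    obtain ⟨hc, hbc⟩ := hbc
    refine ⟨by omega, Function.update st c.1 c.2, ?_, Function.update_self .., ?_⟩
    · rwa [Function.update_of_ne (by omega)]
    · intro t hat htc
      rw [Function.update_of_ne (by omega)]
      obtain rfl | htb := eq_or_ne t b.1
      · rwa [← hc, Function.update_self, hstb]
      · rw [Function.update_of_ne (by omega)]
        exact hstep t hat (by omega)

theorem reach_iterate (h : ∀ v t, Reach (t, ⟨p, some (pre ++ (v + 1) :: replicate s 0)⟩)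
      (descentTime s t, ⟨p, some (pre ++ v :: replicate s 0)⟩)) (n t : ℕ) :
    Reach (t, ⟨p, some (pre ++ n :: replicate s 0)⟩)
      ((descentTime s)^[n] t, ⟨p, some (pre ++ 0 :: replicate s 0)⟩) := by
  induction n generalizing t with
  | zero => exact .refl
  | succ n ih => exact (h n t).trans (ih (descentTime s t))

theorem reach_descentTime (p pre : List ℕ) (s v t : ℕ) :
    Reach (t, ⟨p, some (pre ++ (v + 1) :: replicate s 0)⟩)
      (descentTime s t, ⟨p, some (pre ++ v :: replicate s 0)⟩) := by
  induction s generalizing pre v t with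
  | zero => exact .single ⟨rfl, .descend p pre v _ _ rfl (by simp)⟩
  | succ s ih =>
    have hfirst : Reach (t, ⟨p, some (pre ++ (v + 1) :: replicate (s + 1) 0)⟩)
        (t + 1, ⟨p, some (pre ++ v :: (t + 1) :: replicate s 0)⟩) :=
      .single ⟨rfl, .descend p pre v _ _ (by simp) (by simp +contextual)⟩
    have hrest := reach_iterate (ih (pre ++ [v])) (t + 1) (t + 1)
    simp only [append_assoc, singleton_append] at hrest
    exact hfirst.trans hrest

theorem reach_phaseTime (ht : 2 ≤ t) (hlt : p' < p) (hlength : p'.length = 2)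
    (hp' : ∀ e ∈ p', e ≤ t + 1) : Reach (t, ⟨p, none⟩) (phaseTime t, ⟨p', none⟩) := by
  have hrestart : Reach (t, ⟨p, none⟩) (t + 1, ⟨p', some ([] ++ (t + 1) :: replicate t 0)⟩) :=
    .single ⟨rfl, .restart p p' _ hlt hlength hp' (by simpa using ht) (by simp)
      (by simp +contextual)⟩
  have hdescend := reach_iterate (reach_descentTime p' [] t) (t + 1) (t + 1)
  exact (hrestart.trans hdescend).tail ⟨rfl, .halt p' _⟩

theorem reach_iterate_phaseTime (ht : 2 ≤ t) (hx : x ≤ t + 1) (hn : n ≤ t + 1) :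
    Reach (t, ⟨[x, n], none⟩) (phaseTime^[n] t, ⟨[x, 0], none⟩) := by
  induction n generalizing t with
  | zero => exact .refl
  | succ n ih =>
    have hphase : Reach (t, ⟨[x, n + 1], none⟩) (phaseTime t, ⟨[x, n], none⟩) :=
      reach_phaseTime ht (append_cons_lt_append_succ_cons [x] n [] []) rfl
        (by simp only [mem_cons, not_mem_nil, or_false, forall_eq_or_imp, forall_eq]; omega)
    have htime := lt_phaseTime t
    exact hphase.trans (ih (by omega) (by omega) (by omega))

theorem exists_reach_gt_iterate_ackDiag (ht : 2 ≤ t) :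
    ∃ N σ, Reach (t, ⟨[1, 2], none⟩) (N, σ) ∧ ackDiag^[ackDiag 187196] 1 < N := by
  have hfirst : Reach (t, ⟨[1, 2], none⟩) (phaseTime (phaseTime t), ⟨[1, 0], none⟩) :=
    reach_iterate_phaseTime ht (by omega) (by omega)
  have hack : ackDiag 187196 ≤ phaseTime (phaseTime t) :=
    (ackDiag_le_phaseTime 187196).trans (phaseTime_monotone (le_phaseTime ht))
  have htwo : 2 < phaseTime (phaseTime t) :=
    ht.trans_lt ((lt_phaseTime t).trans (lt_phaseTime _))
  generalize phaseTime (phaseTime t) = u at hfirst hack htwo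
  have hu := lt_phaseTime u
  have hborrow : Reach (u, ⟨[1, 0], none⟩) (phaseTime u, ⟨[0, u + 1], none⟩) :=
    reach_phaseTime htwo.le (append_cons_lt_append_succ_cons [] 0 [0] [u + 1]) rfl (by simp)
  have hsecond : Reach (phaseTime u, ⟨[0, u + 1], none⟩)
      (phaseTime^[u + 1] (phaseTime u), ⟨[0, 0], none⟩) :=
    reach_iterate_phaseTime (by omega) (by omega) (by omega)
  refine ⟨_, _, (hfirst.trans hborrow).trans hsecond, ?_⟩
  calc ackDiag^[ackDiag 187196] 1 ≤ phaseTime^[ackDiag 187196] 1 :=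
        phaseTime_monotone.le_iterate_of_le ackDiag_le_phaseTime _ 1
    _ ≤ phaseTime^[ackDiag 187196] (phaseTime u) := phaseTime_monotone.iterate _ (by omega)
    _ ≤ phaseTime^[u] (phaseTime u) :=
        Function.monotone_iterate_of_id_le (fun t ↦ (lt_phaseTime t).le) hack _
    _ < phaseTime^[u + 1] (phaseTime u) := by
        rw [Function.iterate_succ_apply']
        exact lt_phaseTime _

theorem exists_isRun_gt_iterate_ackDiag :
    ∃ st N, IsRun st N ∧ st 2 = ⟨[1, 2], none⟩ ∧ ackDiag^[ackDiag 187196] 1 < N := by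
  obtain ⟨N, σ, hreach, hN⟩ := exists_reach_gt_iterate_ackDiag le_rfl
  obtain ⟨htwo, st, hstart, -, hstep⟩ := hreach.exists_path
  refine ⟨st, N, ⟨htwo, ?_, hstep⟩, hstart, hN⟩
  rw [hstart]
  exact ⟨rfl, by simp, by simp, by simp, by simp⟩

end Reach

section Markers

/-- The distance between the `j`-th and the `(j + 1)`-st marker. It doubles every three steps. -/
def gap (j : ℕ) : ℕ := 8 * 2 ^ ((j + 2) / 3)

/-- The position of the `j`-th marker, counted from `1`; position `39` is the last one before the
first marker. Since `markerPos (j + 3) = 2 * markerPos j + 1`, every block that begins after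
position `39` contains exactly three markers. -/
def markerPos : ℕ → ℕ
  | 0 => 39
  | j + 1 => markerPos j + gap j

theorem gap_add_three (j : ℕ) : gap (j + 3) = 2 * gap j := by
  rw [gap, gap, show (j + 3 + 2) / 3 = (j + 2) / 3 + 1 by omega, pow_succ]
  ring

theorem gap_monotone : Monotone gap := fun j j' hj ↦ by
  unfold gap
  gcongr
  norm_num

theorem gap_pos (j : ℕ) : 0 < gap j := by
  unfold gap
  positivity

theorem markerPos_succ (j : ℕ) : markerPos (j + 1) = markerPos j + gap j := rfl

theorem markerPos_add_three (j : ℕ) : markerPos (j + 3) = 2 * markerPos j + 1 := by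
  induction j with
  | zero => rfl
  | succ j ih =>
    have hgap := gap_add_three j
    have hnear := markerPos_succ j
    have hfar := markerPos_succ (j + 3)
    rw [show j + 1 + 3 = j + 3 + 1 by omega]
    omega

theorem markerPos_strictMono : StrictMono markerPos :=
  strictMono_nat_of_lt_succ fun j ↦ Nat.lt_add_of_pos_right (gap_pos j)

theorem exists_markerPos_lt_le {i : ℕ} (hi : 39 < i) :
    ∃ j, markerPos j < i ∧ i ≤ markerPos (j + 1) :=
  markerPos_strictMono.exists_between_of_tendsto_atTop markerPos_strictMono.tendsto_atTop hi

theorem add_four_le_of_markerPos_lt {i j J : ℕ} (hi : markerPos j < i)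
    (hJ : 2 * i ≤ markerPos J) : j + 4 ≤ J := by
  have := markerPos_add_three j
  exact markerPos_strictMono.lt_iff_lt.1 (show markerPos (j + 3) < markerPos J by omega)

end Markers

section Blocks

variable {α : Type} {a b l r : List α} {i : ℕ}

theorem friedmanBlock_append_left (hi : 1 ≤ i) (hl : 2 * i ≤ l.length) :
    friedmanBlock (l ++ r) i = friedmanBlock l i := by
  rw [friedmanBlock, drop_append_of_le_length (by omega),
    take_append_of_le_length (by rw [length_drop]; omega), friedmanBlock]

theorem friedmanBlock_append_append (hi : 1 ≤ i) (ha : i ≤ a.length + 1)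
    (hb : a.length + b.length ≤ 2 * i) :
    friedmanBlock (a ++ (b ++ r)) i =
      a.drop (i - 1) ++ (b ++ r.take (2 * i - (a.length + b.length))) := by
  have htake : i + 1 - (a.length - (i - 1)) - b.length = 2 * i - (a.length + b.length) := by omega
  rw [friedmanBlock, drop_append_of_le_length (by omega), take_append, take_append,
    take_of_length_le (by rw [length_drop]; omega),
    take_of_length_le (by rw [length_drop]; omega), length_drop, htake]

/-- The word `w T₀ c T₁ c … T_{J-1} c`. -/
def markedWord (c : α) (w : List α) (T : ℕ → List α) : ℕ → List α
  | 0 => w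
  | J + 1 => markedWord c w T J ++ (T J ++ [c])

variable {c d : α} {w : List α} {T : ℕ → List α} {i' j j' J : ℕ}

theorem length_markedWord (hw : w.length = 39) (hT : ∀ j < J, (T j).length + 1 = gap j) :
    (markedWord c w T J).length = markerPos J := by
  induction J with
  | zero => exact hw
  | succ J ih =>
    have hlength := ih fun j hj ↦ hT j (by omega)
    simp [markedWord, hlength, hT, markerPos_succ]

theorem markedWord_isPrefix (hj : j ≤ J) : markedWord c w T j <+: markedWord c w T J := by
  induction J, hj using Nat.le_induction with
  | base => exact prefix_rfl
  | succ J _ ih => exact ih.trans (prefix_append _ _)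

theorem friedmanBlock_markedWord (hw : w.length = 39) (hT : ∀ j < J, (T j).length + 1 = gap j)
    (hi : markerPos j < i) (hi' : i ≤ markerPos (j + 1)) (hJ : 2 * i ≤ markerPos J) :
    friedmanBlock (markedWord c w T J) i = (T j).drop (i - 1 - markerPos j) ++
      c :: (T (j + 1) ++ c :: (T (j + 2) ++
        c :: (T (j + 3)).take (2 * i - markerPos (j + 3)))) := by
  have hjJ := add_four_le_of_markerPos_lt hi hJ
  obtain ⟨r, hr⟩ := markedWord_isPrefix (c := c) (w := w) (T := T) hjJ
  have hword : markedWord c w T J = (markedWord c w T j ++ T j) ++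
      ((c :: (T (j + 1) ++ c :: (T (j + 2) ++ [c]))) ++ (T (j + 3) ++ c :: r)) := by
    simp [← hr, markedWord]
  have hlength : (markedWord c w T j).length = markerPos j :=
    length_markedWord hw fun j' hj' ↦ hT j' (by omega)
  have hpos := markerPos_succ j
  have hpos₁ := markerPos_succ (j + 1)
  have hpos₂ := markerPos_succ (j + 2)
  have hpos₃ := markerPos_succ (j + 3)
  have hdouble := markerPos_add_three j
  have hdouble₁ := markerPos_add_three (j + 1)
  have hT₀ := hT j (by omega)
  have hT₁ := hT (j + 1) (by omega)
  have hT₂ := hT (j + 2) (by omega)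
  have hT₃ := hT (j + 3) (by omega)
  simp only [Nat.add_assoc, Nat.reduceAdd] at *
  have hmarkers : (markedWord c w T j ++ T j).length +
      (c :: (T (j + 1) ++ c :: (T (j + 2) ++ [c]))).length = markerPos (j + 3) := by
    simp only [length_append, length_cons, length_nil]
    omega
  rw [hword, friedmanBlock_append_append (by omega) (by rw [length_append]; omega)
    (by omega), hmarkers, take_append_of_le_length (by omega), drop_append,
    drop_of_length_le (by omega), hlength]
  simp

theorem sublist_of_three_markers {u a b v u' a' b' v' : List α}
    (h : u ++ c :: (a ++ c :: (b ++ c :: v)) <+ u' ++ c :: (a' ++ c :: (b' ++ c :: v')))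
    (hu' : c ∉ u') (ha' : c ∉ a') (hb' : c ∉ b') (hv' : c ∉ v') :
    u <+ u' ∧ a <+ a' ∧ b <+ b' := by
  classical
  have ha'_count := count_eq_zero_of_not_mem ha'
  have hb'_count := count_eq_zero_of_not_mem hb'
  have hv'_count := count_eq_zero_of_not_mem hv'
  obtain ⟨hu, h⟩ := sublist_and_sublist_of_append_cons h hu'
    (by simp only [count_append, count_cons_self]; omega)
  obtain ⟨ha, h⟩ := sublist_and_sublist_of_append_cons h ha'
    (by simp only [count_append, count_cons_self]; omega)
  obtain ⟨hb, -⟩ := sublist_and_sublist_of_append_cons h hb' (by omega)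
  exact ⟨hu, ha, hb⟩

theorem not_friedmanBlock_markedWord_sublist_of_lt (hw : w.length = 39)
    (hT : ∀ j < J, (T j).length + 1 = gap j) (hc : ∀ j, c ∉ T j)
    (hpair : ∀ j j', j < j' → j' + 4 ≤ J →
      ¬ (T (j + 1) <+ T (j' + 1) ∧ T (j + 2) <+ T (j' + 2)))
    (hi : 39 < i) (hii' : i < i') (hJ : 2 * i' ≤ markerPos J) :
    ¬ friedmanBlock (markedWord c w T J) i <+ friedmanBlock (markedWord c w T J) i' := by
  intro hsub
  obtain ⟨j, hji, hij⟩ := exists_markerPos_lt_le hi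
  obtain ⟨j', hji', hij'⟩ := exists_markerPos_lt_le (hi.trans hii')
  have hjj' : j < j' + 1 := markerPos_strictMono.lt_iff_lt.1 (by omega)
  have hjJ := add_four_le_of_markerPos_lt hji' hJ
  rw [friedmanBlock_markedWord hw hT hji hij (by omega),
    friedmanBlock_markedWord hw hT hji' hij' hJ] at hsub
  obtain ⟨hhead, hfirst, hsecond⟩ := sublist_of_three_markers hsub
    (fun h ↦ hc _ (mem_of_mem_drop h)) (hc _) (hc _) (fun h ↦ hc _ (mem_of_mem_take h))
  obtain hlt | rfl := (Nat.lt_succ_iff.1 hjj').lt_or_eq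
  · exact hpair j j' hlt hjJ ⟨hfirst, hsecond⟩
  · have hlength := hhead.length_le
    have hTj := hT j (by omega)
    have hpos := markerPos_succ j
    simp only [length_drop] at hlength
    omega

theorem not_mem_friedmanBlock_markedWord (hw : w.length = 39)
    (hT : ∀ j < J, (T j).length + 1 = gap j) (hd : ∀ j, d ∉ T j) (hdc : d ≠ c)
    (hi : 39 < i) (hJ : 2 * i ≤ markerPos J) : d ∉ friedmanBlock (markedWord c w T J) i := by
  obtain ⟨j, hji, hij⟩ := exists_markerPos_lt_le hi
  rw [friedmanBlock_markedWord hw hT hji hij hJ]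
  simp only [mem_append, mem_cons, hdc, hd, false_or, not_or]
  exact ⟨fun h ↦ hd _ (mem_of_mem_drop h), fun h ↦ hd _ (mem_of_mem_take h)⟩

-- The letter `d` keeps the early blocks, which all contain it, from embedding into late ones.
theorem satisfiesStar_markedWord (hJ : 3 ≤ J) (hw : w.length = 39)
    (hT : ∀ j < J, (T j).length + 1 = gap j) (hc : ∀ j, c ∉ T j) (hd : ∀ j, d ∉ T j)
    (hdc : d ≠ c) (hstar : SatisfiesStar (markedWord c w T 3))
    (hmem : ∀ i, 1 ≤ i → i ≤ 39 → d ∈ friedmanBlock (markedWord c w T 3) i)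
    (hpair : ∀ j j', j < j' → j' + 4 ≤ J →
      ¬ (T (j + 1) <+ T (j' + 1) ∧ T (j + 2) <+ T (j' + 2))) :
    SatisfiesStar (markedWord c w T J) := by
  have hlength : (markedWord c w T 3).length = 79 :=
    length_markedWord hw fun j hj ↦ hT j (by omega)
  have hearly (i : ℕ) (hi : 1 ≤ i) (hi' : i ≤ 39) :
      friedmanBlock (markedWord c w T J) i = friedmanBlock (markedWord c w T 3) i := by
    obtain ⟨r, hr⟩ := markedWord_isPrefix (c := c) (w := w) (T := T) hJ
    rw [← hr, friedmanBlock_append_left hi (by omega)]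
  intro i i' hi hii' hi'J hsub
  rw [length_markedWord hw hT] at hi'J
  obtain hi' | hi' := le_or_gt i' 39
  · rw [hearly i hi (by omega), hearly i' (by omega) hi'] at hsub
    exact hstar i i' hi hii' (by omega) hsub
  obtain hi₃₉ | hi₃₉ := le_or_gt i 39
  · rw [hearly i hi hi₃₉] at hsub
    exact not_mem_friedmanBlock_markedWord hw hT hd hdc hi' hi'J (hsub.subset (hmem i hi hi₃₉))
  · exact not_friedmanBlock_markedWord_sublist_of_lt hw hT hc hpair hi₃₉ hii' hi'J hsub

end Blocks

section Construction

/-- The part of the long word before the first segment, chosen such that the blocks of `opening`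
all contain the letter `3` and do not embed into each other. -/
def headWord : List (Fin 4) :=
  [0, 3, 3, 2, 2] ++ replicate 6 3 ++ [1, 1, 3, 1, 3] ++ replicate 5 1 ++ [3, 3] ++
    replicate 15 1 ++ [3]

/-- The first `79` letters of the long word. -/
def opening : List (Fin 4) :=
  headWord ++ replicate 7 0 ++ [1] ++ paddedCode 0 2 15 [1, 2] ++ [1] ++ replicate 15 0 ++ [1]

/-- The pieces of the long word that are separated by the markers: after the first one, they code
alternately the slow and the fast components of the states at the times `2, 3, …`. -/
def runSegment (st : ℕ → State) : ℕ → List (Fin 4)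
  | 0 => replicate 7 0
  | j + 1 =>
    if Even j then (st (j / 2 + 2)).slowWord (gap (j + 1) - 1)
    else (st (j / 2 + 2)).fastWord (gap (j + 1) - 1)

variable {st : ℕ → State} {j j' N : ℕ}

theorem satisfiesStar_opening : SatisfiesStar opening := by
  have hbounded : ∀ j < 40, ∀ i < j, 1 ≤ i →
      ¬ (friedmanBlock opening i).Sublist (friedmanBlock opening j) := by
    decide +kernel
  intro i j hi hij hj
  have hlength : opening.length = 79 := by decide
  exact hbounded j (by omega) i hij hi

theorem three_mem_friedmanBlock_opening {i : ℕ} (hi : 1 ≤ i) (hi' : i ≤ 39) :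
    3 ∈ friedmanBlock opening i := by
  have hbounded : ∀ i < 40, 1 ≤ i → 3 ∈ friedmanBlock opening i := by decide +kernel
  exact hbounded i (by omega) hi

theorem mul_succ_add_one_lt_gap : ∀ k, (k + 2) * (k + 2 + 1) + 1 < gap (2 * k + 1)
  | 0 => by decide
  | 1 => by decide
  | 2 => by decide
  | k + 3 => by
    have ih := mul_succ_add_one_lt_gap k
    have hgap : gap (2 * (k + 3) + 1) = 4 * gap (2 * k + 1) := by
      rw [show 2 * (k + 3) + 1 = 2 * k + 1 + 3 + 3 by omega, gap_add_three, gap_add_three]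
      ring
    nlinarith

theorem mul_succ_lt_gap_sub_one (k : ℕ) (hj : 2 * k + 1 ≤ j) :
    (k + 2) * (k + 2 + 1) < gap j - 1 := by
  have hlt := mul_succ_add_one_lt_gap k
  have hle := gap_monotone hj
  omega

theorem runSegment_two_mul_add_one (k : ℕ) :
    runSegment st (2 * k + 1) = (st (k + 2)).slowWord (gap (2 * k + 1) - 1) := by
  simp [runSegment]

theorem runSegment_two_mul_add_two (k : ℕ) :
    runSegment st (2 * k + 2) = (st (k + 2)).fastWord (gap (2 * k + 2) - 1) := by
  rw [runSegment, if_neg (by simp), show (2 * k + 1) / 2 = k by omega]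

theorem eq_zero_or_eq_two_of_mem_runSegment {x : Fin 4} (hx : x ∈ runSegment st j) :
    x = 0 ∨ x = 2 := by
  obtain _ | j := j
  · exact .inl (eq_of_mem_replicate hx)
  · rw [runSegment] at hx
    split at hx
    · exact State.eq_zero_or_eq_two_of_mem_slowWord hx
    · exact State.eq_zero_or_eq_two_of_mem_fastWord hx

namespace IsRun

theorem length_runSegment (h : IsRun st N) (hj : j < 2 * N - 1) :
    (runSegment st j).length + 1 = gap j := by
  have hgap := gap_pos j
  suffices (runSegment st j).length = gap j - 1 by omega
  obtain _ | j := j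
  · rfl
  obtain ⟨k, rfl | rfl⟩ := j.even_or_odd'
  · rw [runSegment_two_mul_add_one]
    exact (h.valid (by omega) (by omega)).length_slowWord (by omega)
      (mul_succ_lt_gap_sub_one k le_rfl)
  · rw [runSegment_two_mul_add_two]
    exact (h.valid (by omega) (by omega)).length_fastWord (mul_succ_lt_gap_sub_one k (by omega))

theorem not_runSegment_sublist_and_sublist (h : IsRun st N) (hjj' : j < j')
    (hj' : j' + 4 ≤ 2 * N - 1) :
    ¬ (runSegment st (j + 1) <+ runSegment st (j' + 1) ∧
      runSegment st (j + 2) <+ runSegment st (j' + 2)) := by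
  have hsize (k : ℕ) := mul_succ_lt_gap_sub_one k (2 * k + 1).le_succ
  have hmixed (k k' : ℕ) (hk : k + 2 ≤ N) (hk' : k' + 2 ≤ N) :
      ¬ runSegment st (2 * k + 2) <+ runSegment st (2 * k' + 1) := by
    rw [runSegment_two_mul_add_one, runSegment_two_mul_add_two]
    refine (h.valid (by omega) hk).not_fastWord_sublist_slowWord ?_ (h.valid (by omega) hk')
    nlinarith [hsize k]
  obtain ⟨k, rfl | rfl⟩ := j.even_or_odd' <;> obtain ⟨k', rfl | rfl⟩ := j'.even_or_odd'
  · simp only [runSegment_two_mul_add_one, runSegment_two_mul_add_two]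
    exact h.not_slowWord_sublist_and_fastWord_sublist (by omega) (by omega) (by omega) (hsize k)
  · exact fun hsub ↦ hmixed k (k' + 1) (by omega) (by omega) hsub.2
  · exact fun hsub ↦ hmixed k k' (by omega) (by omega) hsub.1
  · rw [show 2 * k + 1 + 2 = 2 * (k + 1) + 1 by omega,
      show 2 * k' + 1 + 2 = 2 * (k' + 1) + 1 by omega]
    simp only [runSegment_two_mul_add_one, runSegment_two_mul_add_two]
    exact h.not_fastWord_sublist_and_slowWord_succ_sublist (by omega) (by omega) (by omega)
      (hsize k)

theorem satisfiesStar_markedWord (h : IsRun st N) (hstart : st 2 = ⟨[1, 2], none⟩) :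
    SatisfiesStar (markedWord 1 headWord (runSegment st) (2 * N - 1)) := by
  have hopening : markedWord 1 headWord (runSegment st) 3 = opening := by
    simp [markedWord, runSegment, hstart, State.slowWord, State.fastWord, gap, opening]
  have hletter (j : ℕ) (x : Fin 4) (hx : ¬ (x = 0 ∨ x = 2)) : x ∉ runSegment st j :=
    fun hmem ↦ hx (eq_zero_or_eq_two_of_mem_runSegment hmem)
  have htwo := h.two_le
  refine Friedman.satisfiesStar_markedWord (d := 3) (by omega) rfl
    (fun j ↦ h.length_runSegment) (hletter · 1 (by decide)) (hletter · 3 (by decide)) (by decide)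
    ?_ ?_ fun j j' ↦ h.not_runSegment_sublist_and_sublist
  · exact hopening ▸ satisfiesStar_opening
  · exact fun i hi hi' ↦ hopening ▸ three_mem_friedmanBlock_opening hi hi'

theorem le_length_markedWord (h : IsRun st N) :
    N ≤ (markedWord 1 headWord (runSegment st) (2 * N - 1)).length := by
  rw [length_markedWord rfl fun j ↦ h.length_runSegment]
  have hle := markerPos_strictMono.le_apply (x := 2 * N - 1)
  have htwo := h.two_le
  omega

end IsRun

end Construction

end Friedman

/-- n(4) > A^{(A(187196))}(1): there is a word over a four-letter alphabet of
length greater than the `A(187196)`-fold iterate of the diagonal Ackermann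
function applied to 1, satisfying (*). -/
theorem friedman_n4_gt_iterated_ack :
    ∃ s : List (Fin 4), SatisfiesStar s ∧ ackDiag^[ackDiag 187196] 1 < s.length := by
  obtain ⟨st, N, hrun, hstart, hN⟩ := Friedman.exists_isRun_gt_iterate_ackDiag
  exact ⟨_, hrun.satisfiesStar_markedWord hstart, hN.trans_le hrun.le_length_markedWord⟩
end

section
/- Symbol-count reduction: Let M be a Turing machine with n states and m ≥ 2 tape symbols, let b ≥ 2, and set l = ⌈log_b m⌉. Then there exists a Turing machine M' with exactly b tape symbols and at most n·[(l−1) + (1 + b + b² + … + b^{l−1}) + 2m(l−1)] states — in particular fewer than 2(m+1)·n·⌈log_b m⌉ states — such that M' halts on the blank tape if and only if M halts on the blank tape, and when both halt, M' performs at least as many steps as M. -/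
open Turing

/-- Iterated `TM0.step`: run the machine for `n` steps, returning `none` if it
halts strictly before that. -/
def multistep {Γ Λ : Type} [Inhabited Γ] [Inhabited Λ]
    (M : TM0.Machine Γ Λ) : ℕ → TM0.Cfg Γ Λ → Option (TM0.Cfg Γ Λ)
  | 0, c => some c
  | n + 1, c => (TM0.step M c).bind (multistep M n)

/-- Started from configuration `c₀`, the machine reaches after exactly `T`
steps a configuration on which the transition function is undefined. -/
def HaltsFromIn {Γ Λ : Type} [Inhabited Γ] [Inhabited Λ]
    (M : TM0.Machine Γ Λ) (c₀ : TM0.Cfg Γ Λ) (T : ℕ) : Prop :=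
  ∃ c, multistep M T c₀ = some c ∧ TM0.step M c = none

/-- The machine halts on the blank tape in exactly `T` steps. -/
def HaltsIn {Γ Λ : Type} [Inhabited Γ] [Inhabited Λ]
    (M : TM0.Machine Γ Λ) (T : ℕ) : Prop :=
  HaltsFromIn M (TM0.init []) T

/-!
A symbol of `M` is stored as a block of `k + 1 = ⌈log_b m⌉` letters of the small alphabet, the blank
as a block of blanks. The new machine remembers the letters of the current block while sweeping
right; on its last letter it knows the symbol and looks up the transition of `M`. A move to the
right is then one step, a move to the left is `2 * k + 1` steps, and a write replaces the block
from right to left. Each step of `M` thus costs at least one step, and the new machine halts exactly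
where it looks up an undefined transition.

The states are the prefixes of blocks (`1 + b + ⋯ + b ^ k` of them), the words still to be written
(each needs a state for moving and one for writing), and the `2 * k` counters for moving left. There
are at most `m - 1` nonempty words of each length `i ≤ k`, since `b ^ k < m`.
-/

open StateTransition Relation

section Halting

variable {Γ Λ Γ₁ Λ₁ Γ₂ Λ₂ : Type} [Inhabited Γ] [Inhabited Λ] [Inhabited Γ₁] [Inhabited Λ₁]
  [Inhabited Γ₂] [Inhabited Λ₂]
  {M : TM0.Machine Γ Λ} {M₁ : TM0.Machine Γ₁ Λ₁} {M₂ : TM0.Machine Γ₂ Λ₂}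

theorem haltsFromIn_zero {c : TM0.Cfg Γ Λ} : HaltsFromIn M c 0 ↔ TM0.step M c = none := by
  simp [HaltsFromIn, multistep]

theorem haltsFromIn_succ {c : TM0.Cfg Γ Λ} {T : ℕ} :
    HaltsFromIn M c (T + 1) ↔ ∃ d, TM0.step M c = some d ∧ HaltsFromIn M d T := by
  cases h : TM0.step M c <;> simp [HaltsFromIn, multistep, h]

theorem exists_haltsFromIn_iff_eval_dom {c : TM0.Cfg Γ Λ} :
    (∃ T, HaltsFromIn M c T) ↔ (StateTransition.eval (TM0.step M) c).Dom := by
  simp only [Part.dom_iff_mem, mem_eval]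
  constructor
  · rintro ⟨T, hT⟩
    induction T generalizing c with
    | zero => exact ⟨c, .refl, haltsFromIn_zero.1 hT⟩
    | succ T ih =>
      obtain ⟨d, hcd, hd⟩ := haltsFromIn_succ.1 hT
      obtain ⟨e, hde, he⟩ := ih hd
      exact ⟨e, .head hcd hde, he⟩
  · rintro ⟨e, hce, he⟩
    induction hce using ReflTransGen.head_induction_on with
    | refl => exact ⟨0, haltsFromIn_zero.2 he⟩
    | head hcd _ ih =>
      obtain ⟨T, hT⟩ := ih
      exact ⟨T + 1, haltsFromIn_succ.2 ⟨_, hcd, hT⟩⟩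

theorem HaltsFromIn.exists_le_of_reaches {c d : TM0.Cfg Γ Λ} {T : ℕ} (hT : HaltsFromIn M c T)
    (hcd : Reaches (TM0.step M) c d) : ∃ T' ≤ T, HaltsFromIn M d T' := by
  induction hcd using ReflTransGen.head_induction_on generalizing T with
  | refl => exact ⟨T, le_rfl, hT⟩
  | @head c e hce _ ih =>
    replace hce : TM0.step M c = some e := hce
    cases T with
    | zero => simp [haltsFromIn_zero, hce] at hT
    | succ T =>
      simp only [haltsFromIn_succ, hce, Option.some.injEq, exists_eq_left'] at hT
      obtain ⟨T', hle, hT'⟩ := ih hT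
      exact ⟨T', hle.trans T.le_succ, hT'⟩

theorem HaltsFromIn.exists_lt_of_reaches₁ {c d : TM0.Cfg Γ Λ} {T : ℕ} (hT : HaltsFromIn M c T)
    (hcd : Reaches₁ (TM0.step M) c d) : ∃ T' < T, HaltsFromIn M d T' := by
  obtain ⟨e, hce, hed⟩ := TransGen.head'_iff.1 hcd
  replace hce : TM0.step M c = some e := hce
  cases T with
  | zero => simp [haltsFromIn_zero, hce] at hT
  | succ T =>
    simp only [haltsFromIn_succ, hce, Option.some.injEq, exists_eq_left'] at hT
    obtain ⟨T', hle, hT'⟩ := hT.exists_le_of_reaches hed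
    exact ⟨T', Nat.lt_succ_of_le hle, hT'⟩

theorem HaltsFromIn.le_of_respects {tr : TM0.Cfg Γ Λ → TM0.Cfg Γ₁ Λ₁ → Prop}
    (hr : Respects (TM0.step M) (TM0.step M₁) tr) {c : TM0.Cfg Γ Λ} {c₁ : TM0.Cfg Γ₁ Λ₁}
    (hc : tr c c₁) {T T₁ : ℕ} (hT : HaltsFromIn M c T) (hT₁ : HaltsFromIn M₁ c₁ T₁) : T ≤ T₁ := by
  induction T generalizing c c₁ T₁ with
  | zero => exact T₁.zero_le
  | succ T ih =>
    obtain ⟨d, hcd, hd⟩ := haltsFromIn_succ.1 hT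
    have hstep := hr hc
    rw [hcd] at hstep
    obtain ⟨d₁, hd₁, hreach⟩ := hstep
    obtain ⟨T', hlt, hT'⟩ := hT₁.exists_lt_of_reaches₁ hreach
    exact (ih hd₁ hd hT').trans_lt hlt

/-- `HaltsNoSooner M₁ M`: on the blank tape `M₁` halts exactly when `M` does, and then after at
least as many steps. This is the sense in which the constructed machines simulate `M`. -/
def HaltsNoSooner (M₁ : TM0.Machine Γ₁ Λ₁) (M : TM0.Machine Γ Λ) : Prop :=
  ((∃ T, HaltsIn M₁ T) ↔ ∃ T, HaltsIn M T) ∧ ∀ T T₁, HaltsIn M T → HaltsIn M₁ T₁ → T ≤ T₁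

theorem HaltsNoSooner.trans (h₂ : HaltsNoSooner M₂ M₁) (h₁ : HaltsNoSooner M₁ M) :
    HaltsNoSooner M₂ M := by
  refine ⟨h₂.1.trans h₁.1, fun T T₂ hT hT₂ => ?_⟩
  obtain ⟨T₁, hT₁⟩ := h₁.1.2 ⟨T, hT⟩
  exact (h₁.2 T T₁ hT hT₁).trans (h₂.2 T₁ T₂ hT₁ hT₂)

theorem haltsNoSooner_of_respects {tr : TM0.Cfg Γ Λ → TM0.Cfg Γ₁ Λ₁ → Prop}
    (hr : Respects (TM0.step M) (TM0.step M₁) tr) {c₁ : TM0.Cfg Γ₁ Λ₁}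
    (hinit : tr (TM0.init []) c₁) (hreach : Reaches (TM0.step M₁) (TM0.init []) c₁) :
    HaltsNoSooner M₁ M := by
  constructor
  · simp only [HaltsIn, exists_haltsFromIn_iff_eval_dom]
    rw [reaches_eval hreach]
    exact tr_eval_dom hr hinit
  · intro T T₁ hT hT₁
    obtain ⟨T', hle, hT'⟩ := HaltsFromIn.exists_le_of_reaches hT₁ hreach
    exact (HaltsFromIn.le_of_respects hr hinit hT hT').trans hle

theorem exists_haltsNoSooner_of_supports {S : Set Λ} [Inhabited S]
    (hdefault : ((default : S) : Λ) = default) (hS : TM0.Supports M S) :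
    ∃ N : TM0.Machine Γ S, HaltsNoSooner N M := by
  let retract : PointedMap Λ S :=
    ⟨Function.invFun Subtype.val, by
      rw [← hdefault]; exact Function.leftInverse_invFun Subtype.val_injective _⟩
  have val_retract : ∀ q ∈ S, (retract q : Λ) = q := fun q hq => Function.invFun_eq ⟨⟨q, hq⟩, rfl⟩
  let idΓ : PointedMap Γ Γ := ⟨id, rfl⟩
  refine ⟨M.map idΓ idΓ retract Subtype.val, haltsNoSooner_of_respects
    (TM0.Machine.map_respects M idΓ idΓ retract Subtype.val hS (fun _ => rfl) val_retract)
    ⟨hS.1, TM0.map_init idΓ retract []⟩ .refl⟩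

end Halting

/-- An injective code of the symbols in `Γ` by blocks of `k + 1` letters in `Γ'`, sending the blank
to the block of blanks. A block is kept in reverse, as its last letter followed by the other `k`
letters from right to left, which is the order in which they lie to the left of the head once the
block has been read. -/
structure BlockCode (Γ Γ' : Type*) [Inhabited Γ] [Inhabited Γ'] (k : ℕ) where
  last : Γ → Γ'
  front : Γ → List Γ'
  length_front : ∀ a, (front a).length = k
  last_default : last default = default
  front_default : front default = List.replicate k default
  decode : List Γ' → Γ
  decode_last_cons_front : ∀ a, decode (last a :: front a) = a

/-- Control states of the block simulation. `scan q w`: the letters `w` of the current block have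
been read, most recent first. `back q x w`: move left, then write `x` and the letters of `w`, going
left. `write q x w`: write `x` here and then the letters of `w`, going left. `left q j`: move left
`j + 1` times. In each case `q` is the state of the simulated machine. -/
inductive SimState (Γ' Λ : Type*)
  | scan (q : Λ) (w : List Γ')
  | back (q : Λ) (x : Γ') (w : List Γ')
  | write (q : Λ) (x : Γ') (w : List Γ')
  | left (q : Λ) (j : ℕ)

namespace SimState

variable {Γ' Λ : Type*}

instance [Inhabited Λ] : Inhabited (SimState Γ' Λ) := ⟨scan default []⟩

/-- The state in which the letters of a word are still to be written to the left of the head. -/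
def writeLeft (q : Λ) : List Γ' → SimState Γ' Λ
  | [] => scan q []
  | x :: w => back q x w

/-- The state in which the head is still to be moved left a given number of times. -/
def moveLeft (q : Λ) : ℕ → SimState Γ' Λ
  | 0 => scan q []
  | j + 1 => left q j

/-- The finitely many states that occur when simulating with blocks of length `k + 1`. -/
def used (Γ' Λ : Type*) (k : ℕ) : Set (SimState Γ' Λ) :=
  {s | match s with
    | scan _ w => w.length ≤ k
    | back _ _ w => w.length < k
    | write _ _ w => w.length < k
    | left _ j => j < 2 * k}

variable {k : ℕ}

theorem writeLeft_mem_used {q : Λ} {w : List Γ'} (hw : w.length ≤ k) :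
    writeLeft q w ∈ used Γ' Λ k := by
  cases w with
  | nil => exact k.zero_le
  | cons x w => exact hw

theorem moveLeft_mem_used {q : Λ} {j : ℕ} (hj : j ≤ 2 * k) : moveLeft q j ∈ used Γ' Λ k := by
  cases j with
  | zero => exact k.zero_le
  | succ j => exact hj

instance [Inhabited Λ] : Inhabited (used Γ' Λ k) := ⟨⟨default, k.zero_le⟩⟩

/-- A finite type indexing the used states, for counting them. -/
abbrev UsedIndex (Γ' Λ : Type*) (k : ℕ) : Type _ :=
  Λ × ((Σ i : Fin (k + 1), List.Vector Γ' i) ⊕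
    (Bool × Γ' × Σ i : Fin k, List.Vector Γ' i) ⊕ Fin (2 * k))

/-- The state with a given index; the Boolean selects between `back` and `write`. -/
def ofIndex : UsedIndex Γ' Λ k → SimState Γ' Λ
  | (q, .inl ⟨_, w⟩) => scan q w.toList
  | (q, .inr (.inl (true, x, ⟨_, w⟩))) => back q x w.toList
  | (q, .inr (.inl (false, x, ⟨_, w⟩))) => write q x w.toList
  | (q, .inr (.inr j)) => left q j

theorem used_subset_range_ofIndex : used Γ' Λ k ⊆ Set.range (ofIndex (k := k)) := by
  intro s hs
  cases s with
  | scan q w => exact ⟨(q, .inl ⟨⟨w.length, Nat.lt_succ_of_le hs⟩, w, rfl⟩), rfl⟩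
  | back q x w => exact ⟨(q, .inr (.inl (true, x, ⟨⟨w.length, hs⟩, w, rfl⟩))), rfl⟩
  | write q x w => exact ⟨(q, .inr (.inl (false, x, ⟨⟨w.length, hs⟩, w, rfl⟩))), rfl⟩
  | left q j => exact ⟨(q, .inr (.inr ⟨j, hs⟩)), rfl⟩

instance [Finite Γ'] [Finite Λ] : Finite (used Γ' Λ k) :=
  (Set.finite_range ofIndex).subset used_subset_range_ofIndex

theorem card_used_le [Fintype Γ'] [Fintype Λ] :
    Nat.card (used Γ' Λ k) ≤ Fintype.card Λ *
      (∑ i ∈ Finset.range (k + 1), Fintype.card Γ' ^ i +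
        (2 * ∑ i ∈ Finset.range k, Fintype.card Γ' ^ (i + 1) + 2 * k)) :=
  calc
    Nat.card (used Γ' Λ k) ≤ Nat.card (Set.range (ofIndex (Γ' := Γ') (Λ := Λ) (k := k))) :=
      Nat.card_mono (Set.finite_range ofIndex) used_subset_range_ofIndex
    _ ≤ Nat.card (UsedIndex Γ' Λ k) := Finite.card_range_le ofIndex
    _ = _ := by
      simp [Finset.sum_range, Finset.mul_sum, pow_succ']

end SimState

namespace BlockCode

open SimState

section Code

variable {Γ Γ' : Type*} [Inhabited Γ] [Inhabited Γ'] {k : ℕ}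

theorem nonempty_of_card_le [Fintype Γ] [Fintype Γ']
    (h : Fintype.card Γ ≤ Fintype.card Γ' ^ (k + 1)) : Nonempty (BlockCode Γ Γ' k) := by
  classical
  obtain ⟨e⟩ : Nonempty (Γ ↪ (Fin (k + 1) → Γ')) :=
    Function.Embedding.nonempty_of_card_le (by simpa using h)
  let blank : Fin (k + 1) → Γ' := fun _ => default
  let code : Γ ↪ (Fin (k + 1) → Γ') := e.trans (Equiv.swap (e default) blank).toEmbedding
  have code_default : code default = blank := Equiv.swap_apply_left _ _
  let word : Γ → List Γ' := fun a => List.ofFn (code a)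
  have word_injective : Function.Injective word := List.ofFn_injective.comp code.injective
  exact ⟨{
    last := fun a => code a 0
    front := fun a => List.ofFn fun i => code a i.succ
    length_front := by simp
    last_default := by rw [code_default]
    front_default := by rw [code_default]; exact List.ofFn_const k default
    decode := Function.invFun word
    decode_last_cons_front := fun a => by
      simpa [word, List.ofFn_succ] using Function.leftInverse_invFun word_injective a }⟩

/-- The block of a symbol, from right to left. -/
def revBlock (e : BlockCode Γ Γ' k) (a : Γ) : List Γ' := e.last a :: e.front a

theorem revBlock_default (e : BlockCode Γ Γ' k) :
    e.revBlock default = List.replicate (k + 1) default := by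
  rw [revBlock, e.last_default, e.front_default, List.replicate_succ]

theorem length_revBlock (e : BlockCode Γ Γ' k) (a : Γ) : (e.revBlock a).length = k + 1 := by
  rw [revBlock, List.length_cons, e.length_front]

/-- The encoding of a left half-tape, whose cells are listed from right to left. -/
def encodeLeft (e : BlockCode Γ Γ' k) (L : ListBlank Γ) : ListBlank Γ' :=
  L.flatMap e.revBlock ⟨k + 1, e.revBlock_default⟩

/-- The encoding of a right half-tape, whose cells are listed from left to right. -/
def encodeRight (e : BlockCode Γ Γ' k) (R : ListBlank Γ) : ListBlank Γ' :=
  R.flatMap (fun a => (e.revBlock a).reverse)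
    ⟨k + 1, by rw [revBlock_default, List.reverse_replicate]⟩

theorem encodeLeft_cons (e : BlockCode Γ Γ' k) (a : Γ) (L : ListBlank Γ) :
    e.encodeLeft (L.cons a) = (e.encodeLeft L).append (e.revBlock a) :=
  ListBlank.cons_flatMap ..

theorem encodeRight_cons (e : BlockCode Γ Γ' k) (a : Γ) (R : ListBlank Γ) :
    e.encodeRight (R.cons a) = ((e.encodeRight R).cons (e.last a)).append (e.front a).reverse := by
  rw [encodeRight, ListBlank.cons_flatMap, revBlock, List.reverse_cons, ListBlank.append_assoc]
  rfl

end Code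

section Simulation

variable {Γ Γ' Λ : Type*} [Inhabited Γ] [Inhabited Γ'] {k : ℕ}
  (e : BlockCode Γ Γ' k)

/-- The first step of the simulation of an instruction of `M`, taken on the last letter of the
block under the head. A move to the left passes the `k + 1` letters of the block on the left and the
`k` other letters of the current one; the first of these moves is this step. -/
def firstStep : Λ × TM0.Stmt Γ → SimState Γ' Λ × TM0.Stmt Γ'
  | (q, .move .right) => (scan q [], .move .right)
  | (q, .move .left) => (moveLeft q (2 * k), .move .left)
  | (q, .write a) => (writeLeft q (e.front a), .write (e.last a))

theorem firstStep_mem_used (p : Λ × TM0.Stmt Γ) : (e.firstStep p).1 ∈ used Γ' Λ k := by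
  match p with
  | (_, .move .right) => exact k.zero_le
  | (_, .move .left) => exact moveLeft_mem_used le_rfl
  | (_, .write a) => exact writeLeft_mem_used (e.length_front a).le

variable [Inhabited Λ] (M : TM0.Machine Γ Λ)

/-- The machine over `Γ'` simulating `M` on blocks of length `k + 1`. Its state type is infinite,
but it never leaves `SimState.used`. -/
def machine : TM0.Machine Γ' (SimState Γ' Λ)
  | scan q w, x =>
    if w.length < k then some (scan q (x :: w), .move .right)
    else (M q (e.decode (x :: w))).map e.firstStep
  | back q x w, _ => some (write q x w, .move .left)
  | write q x w, _ => some (writeLeft q w, .write x)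
  | left q j, _ => some (moveLeft q j, .move .left)

theorem supports_used : TM0.Supports (e.machine M) (used Γ' Λ k) := by
  refine ⟨k.zero_le, fun {s x s' i} hstep hs => ?_⟩
  cases s with
  | scan q w =>
    simp only [machine] at hstep
    split_ifs at hstep with hw
    · cases hstep
      exact hw
    · obtain ⟨p, -, hp⟩ := Option.map_eq_some_iff.1 hstep
      have hmem := e.firstStep_mem_used p
      rwa [hp] at hmem
  | back q y w =>
    cases hstep
    exact hs
  | write q y w =>
    cases hstep
    exact writeLeft_mem_used (Nat.le_of_lt hs)
  | left q j =>
    cases hstep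
    exact moveLeft_mem_used (Nat.le_of_lt hs)

theorem reaches_scan (q : Λ) (u w : List Γ') (L R : ListBlank Γ') (h : u.length + w.length ≤ k) :
    Reaches (TM0.step (e.machine M)) ⟨scan q w, Tape.mk' L (R.append u)⟩
      ⟨scan q (u.reverse ++ w), Tape.mk' (L.append u.reverse) R⟩ := by
  induction u generalizing w L with
  | nil => exact .refl
  | cons x u ih =>
    rw [List.length_cons] at h
    have hw : w.length < k := by omega
    rw [List.reverse_cons, List.append_assoc, ListBlank.append_assoc]
    refine .head ?_ (ih (x :: w) (L.cons x) (by rw [List.length_cons]; omega))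
    simp [TM0.step, machine, hw]

theorem reaches₁_left (q : Λ) (j : ℕ) (u : List Γ') (L R : ListBlank Γ') (hu : u.length = j + 1) :
    Reaches₁ (TM0.step (e.machine M)) ⟨left q j, Tape.mk' (L.append u) R⟩
      ⟨scan q [], Tape.mk' L (R.append u.reverse)⟩ := by
  induction j generalizing u R with
  | zero =>
    obtain ⟨x, rfl⟩ := List.length_eq_one_iff.1 hu
    exact .single (by simp [TM0.step, machine, moveLeft])
  | succ j ih =>
    obtain ⟨x, u, rfl⟩ := List.exists_cons_of_length_eq_add_one hu
    rw [List.reverse_cons, ListBlank.append_assoc]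
    refine .head ?_ (ih u (R.cons x) (by simpa using hu))
    simp [TM0.step, machine, moveLeft]

theorem reaches₁_write (q : Λ) (x y : Γ') (w v : List Γ') (L R : ListBlank Γ')
    (hv : v.length = w.length) :
    Reaches₁ (TM0.step (e.machine M)) ⟨write q x w, Tape.mk' (L.append v) (R.cons y)⟩
      ⟨scan q [], Tape.mk' L ((R.cons x).append w.reverse)⟩ := by
  induction w generalizing x y v R with
  | nil =>
    obtain rfl := List.length_eq_zero_iff.1 hv
    exact .single (by simp [TM0.step, machine, writeLeft])
  | cons x' w ih =>
    obtain ⟨y', v, rfl⟩ := List.exists_cons_of_length_eq_add_one hv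
    rw [List.reverse_cons, ListBlank.append_assoc]
    refine .head (b := ⟨back q x' w, Tape.mk' (L.append (y' :: v)) (R.cons x)⟩) ?_
      (.head ?_ (ih x' y' v (R.cons x) (by simpa using hv)))
    · simp [TM0.step, machine, writeLeft]
    · simp [TM0.step, machine]

/-- The configuration of the simulation on the first letter of the block under the head. -/
def startCfg (c : TM0.Cfg Γ Λ) : TM0.Cfg Γ' (SimState Γ' Λ) :=
  ⟨scan c.q [], Tape.mk' (e.encodeLeft c.Tape.left) (e.encodeRight c.Tape.right₀)⟩

/-- The configuration of the simulation on the last letter of the block under the head, where the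
transition of `M` is looked up. -/
def lookupCfg (c : TM0.Cfg Γ Λ) : TM0.Cfg Γ' (SimState Γ' Λ) :=
  ⟨scan c.q (e.front c.Tape.head),
    Tape.mk' ((e.encodeLeft c.Tape.left).append (e.front c.Tape.head))
      ((e.encodeRight c.Tape.right).cons (e.last c.Tape.head))⟩

theorem startCfg_init : e.startCfg (TM0.init [] : TM0.Cfg Γ Λ) = TM0.init [] := by
  change TM0.Cfg.mk _ (Tape.mk' _ (e.encodeRight (Tape.mk' _ (ListBlank.mk [])).right₀)) = _
  rw [Tape.mk'_right₀]
  rfl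

theorem reaches_lookupCfg (c : TM0.Cfg Γ Λ) :
    Reaches (TM0.step (e.machine M)) (e.startCfg c) (e.lookupCfg c) := by
  have h := e.reaches_scan M c.q (e.front c.Tape.head).reverse [] (e.encodeLeft c.Tape.left)
    ((e.encodeRight c.Tape.right).cons (e.last c.Tape.head)) (by simp [e.length_front])
  simpa [startCfg, lookupCfg, Tape.right₀, encodeRight_cons] using h

theorem machine_write (q : Λ) (x y : Γ') (w : List Γ') :
    e.machine M (write q x w) y = some (writeLeft q w, .write x) := rfl

theorem machine_left (q : Λ) (j : ℕ) (x : Γ') :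
    e.machine M (left q j) x = some (moveLeft q j, .move .left) := rfl

theorem machine_lookup (q : Λ) (a : Γ) :
    e.machine M (scan q (e.front a)) (e.last a) = (M q a).map e.firstStep := by
  simp [machine, e.length_front, e.decode_last_cons_front]

variable {M} {q q' : Λ} {T : Tape Γ}

theorem reaches₁_startCfg_move_right (h : M q T.head = some (q', .move .right)) :
    Reaches₁ (TM0.step (e.machine M)) (e.lookupCfg ⟨q, T⟩) (e.startCfg ⟨q', T.move .right⟩) := by
  refine .single ?_
  simp [lookupCfg, startCfg, TM0.step, machine_lookup, h, firstStep, Tape.move, Tape.right₀,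
    encodeLeft_cons, revBlock]
  rfl

theorem reaches₁_startCfg_move_left (h : M q T.head = some (q', .move .left)) :
    Reaches₁ (TM0.step (e.machine M)) (e.lookupCfg ⟨q, T⟩) (e.startCfg ⟨q', T.move .left⟩) := by
  obtain ⟨a, L, R⟩ := T
  obtain ⟨a', L, rfl⟩ := L.exists_cons
  have hrun := e.reaches₁_left M q' (2 * k) (e.front a ++ e.revBlock a') (e.encodeLeft L)
    ((e.encodeRight R).cons (e.last a))
    (by rw [List.length_append, e.length_front, e.length_revBlock]; omega)
  rw [reaches₁_eq (b := ⟨left q' (2 * k),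
    Tape.mk' ((e.encodeLeft L).append (e.front a ++ e.revBlock a'))
      ((e.encodeRight R).cons (e.last a))⟩)]
  · simpa [startCfg, Tape.move, Tape.right₀, encodeRight_cons, revBlock, ListBlank.append_assoc]
      using hrun
  · simp [lookupCfg, TM0.step, machine_lookup, h, firstStep, machine_left, encodeLeft_cons,
      ListBlank.append_assoc]

theorem reaches₁_startCfg_write {a : Γ} (h : M q T.head = some (q', .write a)) :
    Reaches₁ (TM0.step (e.machine M)) (e.lookupCfg ⟨q, T⟩) (e.startCfg ⟨q', T.write a⟩) := by
  have hrun := e.reaches₁_write M q' (e.last a) (e.last T.head) (e.front a) (e.front T.head)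
    (e.encodeLeft T.left) (e.encodeRight T.right) (by rw [e.length_front, e.length_front])
  rw [reaches₁_eq (b := ⟨write q' (e.last a) (e.front a), (e.lookupCfg ⟨q, T⟩).Tape⟩)]
  · simpa [startCfg, lookupCfg, Tape.write, Tape.right₀, encodeRight_cons] using hrun
  · simp [lookupCfg, TM0.step, machine_lookup, h, firstStep, machine_write]

theorem respects_lookupCfg :
    Respects (TM0.step M) (TM0.step (e.machine M)) fun c d => e.lookupCfg c = d := by
  rw [fun_respects]
  rintro ⟨q, T⟩
  match h : M q T.head with
  | none => simp [FRespects, TM0.step, h, lookupCfg, machine_lookup]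
  | some (q', .move .right) =>
    rw [show TM0.step M ⟨q, T⟩ = some ⟨q', T.move .right⟩ by simp [TM0.step, h]]
    exact (e.reaches₁_startCfg_move_right h).trans_left (e.reaches_lookupCfg M _)
  | some (q', .move .left) =>
    rw [show TM0.step M ⟨q, T⟩ = some ⟨q', T.move .left⟩ by simp [TM0.step, h]]
    exact (e.reaches₁_startCfg_move_left h).trans_left (e.reaches_lookupCfg M _)
  | some (q', .write a) =>
    rw [show TM0.step M ⟨q, T⟩ = some ⟨q', T.write a⟩ by simp [TM0.step, h]]
    exact (e.reaches₁_startCfg_write h).trans_left (e.reaches_lookupCfg M _)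

end Simulation

theorem haltsNoSooner_machine {Γ Γ' Λ : Type} [Inhabited Γ] [Inhabited Γ'] [Inhabited Λ] {k : ℕ}
    (e : BlockCode Γ Γ' k) (M : TM0.Machine Γ Λ) : HaltsNoSooner (e.machine M) M :=
  haltsNoSooner_of_respects e.respects_lookupCfg rfl
    (e.startCfg_init (Λ := Λ) ▸ e.reaches_lookupCfg M _)

end BlockCode

section StateCount

variable {b m k : ℕ}

theorem sum_pow_succ_add_le (hb : 0 < b) (hk : b ^ k < m) :
    ∑ i ∈ Finset.range k, b ^ (i + 1) + k ≤ m * k :=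
  calc
    ∑ i ∈ Finset.range k, b ^ (i + 1) + k = ∑ i ∈ Finset.range k, (b ^ (i + 1) + 1) := by
      simp [Finset.sum_add_distrib]
    _ ≤ ∑ _i ∈ Finset.range k, m := Finset.sum_le_sum fun i hi =>
      (Nat.pow_le_pow_right hb (Finset.mem_range.1 hi)).trans_lt hk
    _ = m * k := by simp [mul_comm]

theorem sum_range_succ_pow_lt (hb : 2 ≤ b) (hk : b ^ k < m) :
    ∑ i ∈ Finset.range (k + 1), b ^ i < 2 * m := by
  have hgeom : ∑ i ∈ Finset.range k, b ^ i < b ^ k :=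
    Nat.geomSum_lt hb fun _ => Finset.mem_range.1
  rw [Finset.sum_range_succ]
  omega

theorem stateBound_lt {n : ℕ} (hn : 0 < n) (hb : 2 ≤ b) (hk : b ^ k < m) :
    n * (k + ∑ i ∈ Finset.range (k + 1), b ^ i + 2 * m * k) < 2 * (m + 1) * n * (k + 1) :=
  calc
    n * (k + ∑ i ∈ Finset.range (k + 1), b ^ i + 2 * m * k) < n * (k + 2 * m + 2 * m * k) := by
      gcongr
      exact sum_range_succ_pow_lt hb hk
    _ ≤ n * (2 * (m + 1) * (k + 1)) := by gcongr; nlinarith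
    _ = 2 * (m + 1) * n * (k + 1) := by ring

end StateCount

theorem SimState.card_used_le_of_pow_lt {Γ' Λ : Type*} [Fintype Γ'] [Nonempty Γ'] [Fintype Λ]
    {m k : ℕ} (hk : Fintype.card Γ' ^ k < m) :
    Nat.card (SimState.used Γ' Λ k) ≤
      Fintype.card Λ * (k + ∑ i ∈ Finset.range (k + 1), Fintype.card Γ' ^ i + 2 * m * k) := by
  have hwords := sum_pow_succ_add_le Fintype.card_pos hk
  exact SimState.card_used_le.trans (Nat.mul_le_mul_left _ (by linarith))

/-- Symbol-count reduction: any TM with `n` states and `m ≥ 2` symbols can be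
simulated by a TM with exactly `b` symbols (`b ≥ 2`) and at most
`n·[(l−1) + (1 + b + … + b^(l−1)) + 2m(l−1)]` states, where `l = ⌈log_b m⌉`;
in particular fewer than `2(m+1)·n·⌈log_b m⌉` states.  The new machine halts
on blank tape iff the original does, and takes at least as many steps. -/
theorem symbol_reduction (n m b : ℕ) (hm : 2 ≤ m) (hb : 2 ≤ b)
    (Γ Λ : Type) [Fintype Γ] [Inhabited Γ] [Fintype Λ] [Inhabited Λ]
    (hΓ : Fintype.card Γ = m) (hΛ : Fintype.card Λ = n)
    (M : Turing.TM0.Machine Γ Λ) :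
    ∃ (Γ' Λ' : Type) (_iΓ : Fintype Γ') (jΓ : Inhabited Γ')
      (_iΛ : Fintype Λ') (jΛ : Inhabited Λ'),
      Fintype.card Γ' = b ∧
      Fintype.card Λ' ≤
        n * ((Nat.clog b m - 1) + (∑ i ∈ Finset.range (Nat.clog b m), b ^ i)
          + 2 * m * (Nat.clog b m - 1)) ∧
      Fintype.card Λ' < 2 * (m + 1) * n * Nat.clog b m ∧
      ∃ M' : @Turing.TM0.Machine Γ' Λ' jΛ,
        ((∃ T, @HaltsIn Γ' Λ' jΓ jΛ M' T) ↔ ∃ T, HaltsIn M T) ∧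
        (∀ T T', HaltsIn M T → @HaltsIn Γ' Λ' jΓ jΛ M' T' → T ≤ T') := by
  obtain ⟨k, hl⟩ : ∃ k, Nat.clog b m = k + 1 := Nat.exists_eq_add_one.2 (Nat.clog_pos hb hm)
  have hk : b ^ k < m := Nat.pow_lt_of_lt_clog (by omega)
  have hm_le : m ≤ b ^ (k + 1) := hl ▸ Nat.le_pow_clog hb m
  have : NeZero b := ⟨by omega⟩
  obtain ⟨e⟩ : Nonempty (BlockCode Γ (Fin b) k) :=
    BlockCode.nonempty_of_card_le (by rwa [hΓ, Fintype.card_fin])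
  obtain ⟨N, hN⟩ := exists_haltsNoSooner_of_supports rfl (e.supports_used M)
  let states := SimState.used (Fin b) Λ k
  have hcard : Nat.card states ≤ n * (k + ∑ i ∈ Finset.range (k + 1), b ^ i + 2 * m * k) := by
    simpa [states, hΛ] using SimState.card_used_le_of_pow_lt (Γ' := Fin b) (Λ := Λ) (by simpa)
  have hn : 0 < n := hΛ ▸ Fintype.card_pos
  have : Fintype states := Fintype.ofFinite _
  rw [Nat.card_eq_fintype_card] at hcard
  rw [hl, Nat.add_sub_cancel]
  exact ⟨Fin b, states, inferInstance, inferInstance, inferInstance, inferInstance,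
    Fintype.card_fin b, hcard, hcard.trans_lt (stateBound_lt hn hb hk), N,
    hN.trans (e.haltsNoSooner_machine M)⟩
end

section
/- State-count reduction to 2b+1 states: for every Turing machine M with n ≥ 2 states and m tape symbols and every b ≥ 2, setting l = ⌈log_b n⌉, there exists a Turing machine M' with exactly 2b+1 states and at most (n·(b+1)/(b−1) + 2(l−1) + (b^l−1)/(b−1))·m tape symbols such that M' halts on the blank tape if and only if M halts on the blank tape, and when both halt, M' performs at least as many steps as M. -/
open Turing

/-!
The simulator stores the state of `M` on the tape: each cell carries a symbol of `M` together with a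
counter in `ℤ/(n+1)`, whose nonzero values encode the `n` states of `M` and whose value is zero
away from the head. When `M` moves, the counter is carried to the neighbouring cell in unary: the
head shuttles between the two cells, adding `1` on each arrival from the left and subtracting `1` on
each arrival from the right. This preserves the sum of the two counters, so once the old cell
reaches zero the new one holds the state. Remembering where the head stands in the shuttle takes
only five states, which unreachable states pad to `2b + 1`, and `(n + 1) m` symbols are within the
required bound.
-/

section Runs

variable {Γ Λ : Type} [Inhabited Γ] [Inhabited Λ] {M : TM0.Machine Γ Λ} {c c₀ c₁ c₂ : TM0.Cfg Γ Λ}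

theorem multistep_add (M : TM0.Machine Γ Λ) (s t : ℕ) (c : TM0.Cfg Γ Λ) :
    multistep M (s + t) c = (multistep M s c).bind (multistep M t) := by
  induction s generalizing c with
  | zero => rw [Nat.zero_add]; rfl
  | succ s ih =>
    rw [Nat.succ_add]
    cases h : TM0.step M c <;> simp [multistep, h, ih]

theorem HaltsFromIn.le_of_multistep_eq_some {s T : ℕ} (hT : HaltsFromIn M c₀ T)
    (hs : multistep M s c₀ = some c) : s ≤ T := by
  by_contra! hlt
  obtain ⟨c', hc', hstep⟩ := hT
  obtain ⟨d, rfl⟩ := Nat.exists_eq_add_of_lt hlt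
  rw [Nat.add_assoc, multistep_add, hc'] at hs
  simp [multistep, hstep] at hs

theorem exists_multistep_eq_some_of_not_halts (h : ¬ ∃ T, HaltsFromIn M c₀ T) (t : ℕ) :
    ∃ c, multistep M t c₀ = some c := by
  induction t with
  | zero => exact ⟨c₀, rfl⟩
  | succ t ih =>
    obtain ⟨c, hc⟩ := ih
    rw [multistep_add, hc]
    cases hstep : TM0.step M c with
    | none => exact absurd ⟨t, c, hc, hstep⟩ h
    | some c' => exact ⟨c', by simp [multistep, hstep]⟩

/-- `M` runs from `c₁` to `c₂` in `k` or more steps. Lower bounds on step counts are all that is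
needed to compare halting times. -/
def ReachesInAtLeast (M : TM0.Machine Γ Λ) (k : ℕ) (c₁ c₂ : TM0.Cfg Γ Λ) : Prop :=
  ∃ t, k ≤ t ∧ multistep M t c₁ = some c₂

namespace ReachesInAtLeast

theorem refl (M : TM0.Machine Γ Λ) (c : TM0.Cfg Γ Λ) : ReachesInAtLeast M 0 c c :=
  ⟨0, le_rfl, rfl⟩

theorem trans {j k : ℕ} (h₁ : ReachesInAtLeast M j c₀ c₁) (h₂ : ReachesInAtLeast M k c₁ c₂) :
    ReachesInAtLeast M (j + k) c₀ c₂ := by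
  obtain ⟨s, hjs, hs⟩ := h₁
  obtain ⟨t, hkt, ht⟩ := h₂
  exact ⟨s + t, Nat.add_le_add hjs hkt, by rw [multistep_add, hs]; exact ht⟩

theorem mono {j k : ℕ} (h : ReachesInAtLeast M k c₁ c₂) (hjk : j ≤ k) :
    ReachesInAtLeast M j c₁ c₂ :=
  h.imp fun _ ht => ⟨hjk.trans ht.1, ht.2⟩

theorem single (h : TM0.step M c₁ = some c₂) : ReachesInAtLeast M 1 c₁ c₂ :=
  ⟨1, le_rfl, by simp [multistep, h]⟩

theorem head {k : ℕ} (h₁ : TM0.step M c₀ = some c₁) (h₂ : ReachesInAtLeast M k c₁ c₂) :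
    ReachesInAtLeast M k c₀ c₂ :=
  ((single h₁).trans h₂).mono (Nat.le_add_left k 1)

end ReachesInAtLeast

end Runs

section Simulation

variable {Γ Λ Γ' Λ' : Type} [Inhabited Γ] [Inhabited Λ] [Inhabited Γ'] [Inhabited Λ']
  {M : TM0.Machine Γ Λ} {M' : TM0.Machine Γ' Λ'} {tr : TM0.Cfg Γ Λ → TM0.Cfg Γ' Λ'}

/-- `M'` simulates `M` from the blank tape along the translation `tr` of configurations, spending at
least one step on each step of `M`. -/
structure IsSimulation (M : TM0.Machine Γ Λ) (M' : TM0.Machine Γ' Λ')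
    (tr : TM0.Cfg Γ Λ → TM0.Cfg Γ' Λ') : Prop where
  init : ReachesInAtLeast M' 0 (TM0.init []) (tr (TM0.init []))
  step : ∀ c c', TM0.step M c = some c' → ReachesInAtLeast M' 1 (tr c) (tr c')
  halt : ∀ c, TM0.step M c = none → TM0.step M' (tr c) = none

namespace IsSimulation

theorem reachesInAtLeast_tr (h : IsSimulation M M' tr) {t : ℕ} {c c' : TM0.Cfg Γ Λ}
    (hc : multistep M t c = some c') : ReachesInAtLeast M' t (tr c) (tr c') := by
  induction t generalizing c with
  | zero =>
    obtain rfl : c = c' := Option.some_inj.mp hc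
    exact .refl M' (tr c)
  | succ t ih =>
    obtain ⟨c₁, hstep, hrest⟩ := Option.bind_eq_some_iff.mp hc
    exact ((h.step c c₁ hstep).trans (ih hrest)).mono (Nat.add_comm t 1).le

theorem reachesInAtLeast_init (h : IsSimulation M M' tr) {t : ℕ} {c : TM0.Cfg Γ Λ}
    (hc : multistep M t (TM0.init []) = some c) :
    ReachesInAtLeast M' t (TM0.init []) (tr c) :=
  (h.init.trans (h.reachesInAtLeast_tr hc)).mono (Nat.zero_add t).ge

theorem le_of_haltsIn (h : IsSimulation M M' tr) {T T' : ℕ} (hT : HaltsIn M T)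
    (hT' : HaltsIn M' T') : T ≤ T' := by
  obtain ⟨c, hc, -⟩ := hT
  obtain ⟨t, hTt, ht⟩ := h.reachesInAtLeast_init hc
  exact hTt.trans (HaltsFromIn.le_of_multistep_eq_some hT' ht)

theorem exists_haltsIn_iff (h : IsSimulation M M' tr) :
    (∃ T, HaltsIn M' T) ↔ ∃ T, HaltsIn M T := by
  constructor
  · rintro ⟨T', hT'⟩
    by_contra hM
    obtain ⟨c, hc⟩ := exists_multistep_eq_some_of_not_halts hM (T' + 1)
    obtain ⟨t, hlt, ht⟩ := h.reachesInAtLeast_init hc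
    exact hlt.not_gt (Nat.lt_succ_of_le (HaltsFromIn.le_of_multistep_eq_some hT' ht))
  · rintro ⟨T, c, hc, hhalt⟩
    obtain ⟨t, -, ht⟩ := h.reachesInAtLeast_init hc
    exact ⟨t, tr c, ht, h.halt c hhalt⟩

end IsSimulation

end Simulation

section MachineMap

variable {Γ Λ Γ' Λ' : Type} [Inhabited Γ] [Inhabited Λ] [Inhabited Γ'] [Inhabited Λ']
  {f₁ : PointedMap Γ Γ'} {f₂ : PointedMap Γ' Γ} {g₂ : Λ' → Λ}

theorem step_machine_map {g₁ : Λ → Λ'} (M : TM0.Machine Γ Λ) (hf : Function.RightInverse f₁ f₂)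
    (hg : Function.RightInverse g₁ g₂) (c : TM0.Cfg Γ Λ) :
    TM0.step (M.map f₁ f₂ g₁ g₂) (c.map f₁ g₁) = (TM0.step M c).map (TM0.Cfg.map f₁ g₁) :=
  (M.map_step f₁ f₂ g₁ g₂ (S := Set.univ) hf (fun q _ => hg q) c (Set.mem_univ c.q)).symm

theorem multistep_machine_map {g₁ : Λ → Λ'} (M : TM0.Machine Γ Λ)
    (hf : Function.RightInverse f₁ f₂) (hg : Function.RightInverse g₁ g₂) (t : ℕ)
    (c : TM0.Cfg Γ Λ) :
    multistep (M.map f₁ f₂ g₁ g₂) t (c.map f₁ g₁) =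
      (multistep M t c).map (TM0.Cfg.map f₁ g₁) := by
  induction t generalizing c with
  | zero => rfl
  | succ t ih =>
    cases h : TM0.step M c <;> simp [multistep, step_machine_map M hf hg, h, ih]

theorem haltsIn_machine_map_iff {g₁ : PointedMap Λ Λ'} (M : TM0.Machine Γ Λ)
    (hf : Function.RightInverse f₁ f₂) (hg : Function.RightInverse g₁ g₂) (T : ℕ) :
    HaltsIn (M.map f₁ f₂ g₁ g₂) T ↔ HaltsIn M T := by
  have hinit : (TM0.init [] : TM0.Cfg Γ' Λ') = (TM0.init []).map f₁ g₁ :=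
    (TM0.map_init f₁ g₁ []).symm
  simp [HaltsIn, HaltsFromIn, hinit, multistep_machine_map M hf hg, step_machine_map M hf hg]

theorem exists_machine_haltsIn_iff_of_injective (M : TM0.Machine Γ Λ) (g : PointedMap Λ Λ')
    (hg : Function.Injective g) : ∃ M' : TM0.Machine Γ Λ', ∀ T, HaltsIn M' T ↔ HaltsIn M T := by
  let idΓ : PointedMap Γ Γ := ⟨id, rfl⟩
  exact ⟨M.map idΓ idΓ g (Function.invFun g),
    haltsIn_machine_map_iff M (fun _ => rfl) (Function.leftInverse_invFun hg)⟩

end MachineMap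

namespace CounterSimulation

/-- The reverse of a head movement. -/
def opposite : Dir → Dir
  | .left => .right
  | .right => .left

@[simp]
theorem opposite_opposite (d : Dir) : opposite (opposite d) = d := by
  cases d <;> rfl

section Facing

variable {Γ Γ' : Type} [Inhabited Γ] [Inhabited Γ']

/-- The tape with `a` under the head and `x` in the next cell in direction `d`; `behind` is the
half-tape beyond `a` and `ahead` the one beyond `x`. It lets left and right moves be treated at
once. -/
def facing (d : Dir) (a x : Γ) (behind ahead : ListBlank Γ) : Tape Γ :=
  match d with
  | .left => ⟨a, ahead.cons x, behind⟩
  | .right => ⟨a, behind, ahead.cons x⟩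

variable (d : Dir) (a x : Γ) (behind ahead : ListBlank Γ)

@[simp]
theorem head_facing : (facing d a x behind ahead).head = a := by
  cases d <;> rfl

@[simp]
theorem write_facing (b : Γ) :
    (facing d a x behind ahead).write b = facing d b x behind ahead := by
  cases d <;> rfl

@[simp]
theorem move_facing :
    (facing d a x behind ahead).move d = facing (opposite d) x a ahead behind := by
  cases d <;> simp [facing, opposite, Tape.move]

@[simp]
theorem map_facing (f : PointedMap Γ Γ') :
    (facing d a x behind ahead).map f =
      facing d (f a) (f x) (behind.map f) (ahead.map f) := by
  cases d <;> simp [facing, Tape.map]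

theorem exists_eq_facing (d : Dir) (T : Tape Γ) :
    ∃ a x behind ahead, T = facing d a x behind ahead := by
  obtain ⟨a, L, R⟩ := T
  cases d with
  | left => exact ⟨a, L.head, R, L.tail, by simp [facing]⟩
  | right => exact ⟨a, R.head, L, R.tail, by simp [facing]⟩

end Facing

section Increment

variable {N : ℕ}

/-- The amount added to the counter of a cell that is entered by a move in direction `d`. -/
def increment (N : ℕ) : Dir → ZMod N
  | .left => -1
  | .right => 1

theorem increment_opposite (d : Dir) : increment N (opposite d) = -increment N d := by
  cases d <;> simp [increment, opposite]

theorem nsmul_increment_ne_zero (d : Dir) {k : ℕ} (hk : k ≠ 0) (hkN : k < N) :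
    k • increment N d ≠ 0 := by
  have hcast : (k : ZMod N) ≠ 0 := fun h =>
    hk (Nat.eq_zero_of_dvd_of_lt ((ZMod.natCast_eq_zero_iff k N).mp h) hkN)
  cases d <;> simpa [increment] using hcast

theorem exists_lt_nsmul_increment_eq [NeZero N] (d : Dir) (x : ZMod N) :
    ∃ k < N, k • increment N d = x := by
  cases d with
  | left => exact ⟨(-x).val, ZMod.val_lt _, by simp [increment]⟩
  | right => exact ⟨x.val, ZMod.val_lt _, by simp [increment]⟩

end Increment

/-- The states of the simulator. In `home` the counter under the head encodes the state of the
simulated machine. While a counter is being carried to a neighbouring cell, `depart d` is about to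
move in direction `d`, and `arrive d` has just done so. -/
inductive Phase
  | home
  | depart (d : Dir)
  | arrive (d : Dir)
  deriving DecidableEq

instance : Inhabited Phase := ⟨.home⟩

instance : Fintype Phase where
  elems := {.home, .depart .left, .depart .right, .arrive .left, .arrive .right}
  complete := by rintro (_ | (_ | _) | (_ | _)) <;> decide

theorem card_phase : Fintype.card Phase = 5 := rfl

section Simulator

variable {Γ Λ : Type} [Inhabited Γ] {N : ℕ} {e : Option Λ ≃ ZMod N}

/-- Marks a tape symbol as belonging to a cell that holds no state. -/
def withZeroCounter (N : ℕ) (Γ : Type) [Inhabited Γ] : PointedMap Γ (ZMod N × Γ) :=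
  ⟨fun a => (0, a), rfl⟩

/-- The configuration of the simulator that represents `c`: the state of `c` sits in the counter
under the head. -/
def encodeCfg (e : Option Λ ≃ ZMod N) (c : TM0.Cfg Γ Λ) : TM0.Cfg (ZMod N × Γ) Phase :=
  ⟨.home, (c.Tape.map (withZeroCounter N Γ)).write (e (some c.q), c.Tape.head)⟩

theorem encodeCfg_facing (q : Λ) (d : Dir) (a x : Γ) (B F : ListBlank Γ) :
    encodeCfg e ⟨q, facing d a x B F⟩ =
      ⟨.home, facing d (e (some q), a) (0, x) (B.map (withZeroCounter N Γ))
        (F.map (withZeroCounter N Γ))⟩ := by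
  simp [encodeCfg, withZeroCounter]

variable [Inhabited Λ]

/-- The simulator of `M`. The encoding `e` is meant to satisfy `e none = 0`, so that a zero counter
marks a cell that holds no state; `home` meets one only on the initial blank tape. -/
def simulator (e : Option Λ ≃ ZMod N) (M : TM0.Machine Γ Λ) : TM0.Machine (ZMod N × Γ) Phase
  | .home, (s, a) =>
    match e.symm s with
    | none => some (.home, .write (e (some default), a))
    | some q => (M q a).map fun
      | (q', .write a') => (.home, .write (e (some q'), a'))
      | (q', .move d) => (.depart d, .write (e (some q'), a))
  | .depart d, (s, _) => some (if s = 0 then .home else .arrive d, .move d)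
  | .arrive d, (s, a) => some (.depart (opposite d), .write (s + increment N d, a))

variable (M : TM0.Machine Γ Λ) {d : Dir} {s t : ZMod N} {a x : Γ} {B F : ListBlank (ZMod N × Γ)}

theorem step_depart_zero :
    TM0.step (simulator e M) ⟨.depart d, facing d (0, a) (t, x) B F⟩ =
      some ⟨.home, facing (opposite d) (t, x) (0, a) F B⟩ := by
  simp [TM0.step, simulator]

theorem step_depart_of_ne_zero (hs : s ≠ 0) :
    TM0.step (simulator e M) ⟨.depart d, facing d (s, a) (t, x) B F⟩ =
      some ⟨.arrive d, facing (opposite d) (t, x) (s, a) F B⟩ := by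
  simp [TM0.step, simulator, hs]

theorem step_arrive {d' : Dir} :
    TM0.step (simulator e M) ⟨.arrive d, facing d' (s, a) (t, x) B F⟩ =
      some ⟨.depart (opposite d), facing d' (s + increment N d, a) (t, x) B F⟩ := by
  simp [TM0.step, simulator]

theorem reaches_after_round_trip (hs : s ≠ 0) (ht : t + increment N d ≠ 0) :
    ReachesInAtLeast (simulator e M) 0 ⟨.depart d, facing d (s, a) (t, x) B F⟩
      ⟨.depart d, facing d (s - increment N d, a) (t + increment N d, x) B F⟩ := by
  have hback : TM0.step (simulator e M)
      ⟨.depart (opposite d), facing (opposite d) (t + increment N d, x) (s, a) F B⟩ =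
        some ⟨.arrive (opposite d), facing d (s, a) (t + increment N d, x) B F⟩ := by
    simpa only [opposite_opposite] using step_depart_of_ne_zero M (d := opposite d) ht
  have hsource : TM0.step (simulator e M)
      ⟨.arrive (opposite d), facing d (s, a) (t + increment N d, x) B F⟩ =
        some ⟨.depart d, facing d (s - increment N d, a) (t + increment N d, x) B F⟩ := by
    rw [step_arrive, opposite_opposite, increment_opposite, sub_eq_add_neg]
  exact .head (step_depart_of_ne_zero M hs) <| .head (step_arrive M) <| .head hback <|
    .head hsource <| .refl _ _

/-- Both counters stay among the multiples `i • increment N d` with `i < N`, so neither wraps around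
to zero before the old cell is exhausted. -/
theorem reaches_after_transfer {j k : ℕ} (hjk : j + k < N) :
    ReachesInAtLeast (simulator e M) 0
      ⟨.depart d, facing d (k • increment N d, a) (j • increment N d, x) B F⟩
      ⟨.home, facing (opposite d) ((j + k) • increment N d, x) (0, a) F B⟩ := by
  induction k generalizing j with
  | zero =>
    rw [zero_nsmul]
    exact .head (step_depart_zero M) (.refl _ _)
  | succ k ih =>
    have hsource : (k + 1) • increment N d ≠ 0 :=
      nsmul_increment_ne_zero d k.succ_ne_zero (by omega)
    have htarget : j • increment N d + increment N d ≠ 0 := by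
      rw [← succ_nsmul]
      exact nsmul_increment_ne_zero d j.succ_ne_zero (by omega)
    have hround := reaches_after_round_trip (e := e) M (a := a) (x := x) (B := B) (F := F)
      hsource htarget
    rw [← succ_nsmul, succ_nsmul (n := k), add_sub_cancel_right] at hround
    have hrest := ih (j := j + 1) (by omega)
    rw [show j + 1 + k = j + (k + 1) by omega] at hrest
    simpa only [succ_nsmul (n := k)] using hround.trans hrest

theorem reaches_after_carry [NeZero N] (s : ZMod N) :
    ReachesInAtLeast (simulator e M) 0 ⟨.depart d, facing d (s, a) (0, x) B F⟩
      ⟨.home, facing (opposite d) (s, x) (0, a) F B⟩ := by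
  obtain ⟨k, hk, rfl⟩ := exists_lt_nsmul_increment_eq d s
  simpa using reaches_after_transfer (e := e) M (j := 0) (k := k) (by omega)

theorem step_encodeCfg_eq_none (c : TM0.Cfg Γ Λ) (h : TM0.step M c = none) :
    TM0.step (simulator e M) (encodeCfg e c) = none := by
  have hM : M c.q c.Tape.head = none := by simpa [TM0.step] using h
  simp [TM0.step, simulator, encodeCfg, Tape.write, hM]

theorem step_encodeCfg_of_write {q q' : Λ} {T : Tape Γ} {b : Γ}
    (h : M q T.head = some (q', .write b)) :
    TM0.step (simulator e M) (encodeCfg e ⟨q, T⟩) = some (encodeCfg e ⟨q', T.write b⟩) := by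
  simp [TM0.step, simulator, encodeCfg, Tape.write, Tape.map, h]

theorem step_encodeCfg_of_move {q q' : Λ} {L R : ListBlank Γ}
    (h : M q a = some (q', .move d)) :
    TM0.step (simulator e M) (encodeCfg e ⟨q, facing d a x L R⟩) =
      some ⟨.depart d, facing d (e (some q'), a) (0, x) (L.map (withZeroCounter N Γ))
        (R.map (withZeroCounter N Γ))⟩ := by
  simp [TM0.step, simulator, encodeCfg_facing, h]

theorem reaches_encodeCfg_of_step [NeZero N] (c c' : TM0.Cfg Γ Λ) (h : TM0.step M c = some c') :
    ReachesInAtLeast (simulator e M) 1 (encodeCfg e c) (encodeCfg e c') := by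
  obtain ⟨q, T⟩ := c
  obtain ⟨⟨q', d | b⟩, hM, rfl⟩ := Option.map_eq_some_iff.mp h
  · obtain ⟨a, x, L, R, rfl⟩ := exists_eq_facing d T
    rw [head_facing] at hM
    simp only [move_facing, encodeCfg_facing q']
    exact (ReachesInAtLeast.single (step_encodeCfg_of_move M hM)).trans (reaches_after_carry M _)
  · exact .single (step_encodeCfg_of_write M hM)

theorem step_init (he : e none = 0) :
    TM0.step (simulator e M) (TM0.init []) = some (encodeCfg e (TM0.init [])) := by
  have hblank : TM0.init [] =
      (⟨.home, (Tape.mk₁ []).map (withZeroCounter N Γ)⟩ : TM0.Cfg (ZMod N × Γ) Phase) := by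
    rw [Tape.map_mk₁]; rfl
  have hdecode : e.symm 0 = none := by rw [← he, e.symm_apply_apply]
  rw [hblank]
  simp [TM0.step, simulator, encodeCfg, TM0.init, withZeroCounter, hdecode]

theorem isSimulation_simulator [NeZero N] (he : e none = 0) :
    IsSimulation M (simulator e M) (encodeCfg e) where
  init := .head (step_init M he) (.refl _ _)
  step := reaches_encodeCfg_of_step M
  halt := step_encodeCfg_eq_none M

end Simulator

theorem exists_option_equiv_zmod (Λ : Type) [Fintype Λ] :
    ∃ e : Option Λ ≃ ZMod (Fintype.card Λ + 1), e none = 0 :=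
  ⟨(Equiv.optionCongr (Fintype.equivFin Λ)).trans (finSuccEquiv _).symm, rfl⟩

theorem add_one_le_symbol_bound {n b : ℕ} (hn : 2 ≤ n) (hb : 2 ≤ b) :
    (n : ℝ) + 1 ≤ (n : ℝ) * (b + 1) / ((b : ℝ) - 1) + 2 * ((Nat.clog b n : ℝ) - 1)
      + ((b : ℝ) ^ (Nat.clog b n) - 1) / ((b : ℝ) - 1) := by
  have hclog : 1 ≤ Nat.clog b n := Nat.clog_pos hb hn
  have hclogR : (1 : ℝ) ≤ Nat.clog b n := by exact_mod_cast hclog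
  have hbR : (2 : ℝ) ≤ b := by exact_mod_cast hb
  have hb_sub : (0 : ℝ) < (b : ℝ) - 1 := by linarith
  have hstates : (n : ℝ) ≤ (n : ℝ) * (b + 1) / ((b : ℝ) - 1) := by
    rw [le_div_iff₀ hb_sub]
    gcongr
    linarith
  have hblank : (1 : ℝ) ≤ ((b : ℝ) ^ (Nat.clog b n) - 1) / ((b : ℝ) - 1) := by
    rw [le_div_iff₀ hb_sub, one_mul]
    gcongr
    exact le_self_pow₀ (by linarith) (by omega)
  linarith

end CounterSimulation

open CounterSimulation in
theorem state_reduction_2b_plus_one_general (Γ Λ : Type) [Fintype Γ] [Inhabited Γ] [Fintype Λ]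
    [Inhabited Λ] (M : TM0.Machine Γ Λ) {s : ℕ} (hs : 5 ≤ s) :
    ∃ (Γ' Λ' : Type) (_ : Fintype Γ') (_ : Inhabited Γ') (_ : Fintype Λ') (_ : Inhabited Λ'),
      Fintype.card Λ' = s ∧ Fintype.card Γ' = (Fintype.card Λ + 1) * Fintype.card Γ ∧
      ∃ M' : TM0.Machine Γ' Λ',
        ((∃ T, HaltsIn M' T) ↔ ∃ T, HaltsIn M T) ∧
        (∀ T T', HaltsIn M T → HaltsIn M' T' → T ≤ T') := by
  obtain ⟨e, he⟩ := exists_option_equiv_zmod Λ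
  have hsim := isSimulation_simulator M he
  let _ : Inhabited (Phase ⊕ Fin (s - 5)) := ⟨.inl default⟩
  let inlPhase : PointedMap Phase (Phase ⊕ Fin (s - 5)) := ⟨.inl, rfl⟩
  obtain ⟨M', hM'⟩ :=
    exists_machine_haltsIn_iff_of_injective (simulator e M) inlPhase Sum.inl_injective
  refine ⟨ZMod (Fintype.card Λ + 1) × Γ, Phase ⊕ Fin (s - 5), inferInstance, inferInstance,
    inferInstance, inferInstance, ?_, ?_, M', ?_, ?_⟩
  · rw [Fintype.card_sum, card_phase, Fintype.card_fin]
    omega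
  · rw [Fintype.card_prod, ZMod.card]
  · simpa only [hM'] using hsim.exists_haltsIn_iff
  · exact fun T T' hT hT' => hsim.le_of_haltsIn hT ((hM' T').mp hT')

/-- State-count reduction to `2b+1` states: any TM with `n ≥ 2` states and `m`
symbols can be simulated, for any `b ≥ 2`, by a TM with exactly `2b+1` states
and at most `(n·(b+1)/(b−1) + 2(l−1) + (b^l−1)/(b−1))·m` symbols, where
`l = ⌈log_b n⌉`; it halts on blank tape iff the original does, with at least
as many steps. -/
theorem state_reduction_2b_plus_one (n m b : ℕ) (hn : 2 ≤ n) (hb : 2 ≤ b)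
    (Γ Λ : Type) [Fintype Γ] [Inhabited Γ] [Fintype Λ] [Inhabited Λ]
    (hΓ : Fintype.card Γ = m) (hΛ : Fintype.card Λ = n)
    (M : Turing.TM0.Machine Γ Λ) :
    ∃ (Γ' Λ' : Type) (_iΓ : Fintype Γ') (jΓ : Inhabited Γ')
      (_iΛ : Fintype Λ') (jΛ : Inhabited Λ'),
      Fintype.card Λ' = 2 * b + 1 ∧
      (Fintype.card Γ' : ℝ) ≤
        ((n : ℝ) * (b + 1) / ((b : ℝ) - 1) + 2 * ((Nat.clog b n : ℝ) - 1)
          + ((b : ℝ) ^ (Nat.clog b n) - 1) / ((b : ℝ) - 1)) * m ∧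
      ∃ M' : @Turing.TM0.Machine Γ' Λ' jΛ,
        ((∃ T, @HaltsIn Γ' Λ' jΓ jΛ M' T) ↔ ∃ T, HaltsIn M T) ∧
        (∀ T T', HaltsIn M T → @HaltsIn Γ' Λ' jΓ jΛ M' T' → T ≤ T') := by
  obtain ⟨Γ', Λ', iΓ, jΓ, iΛ, jΛ, hstates, hsymbols, M', hM'⟩ :=
    state_reduction_2b_plus_one_general Γ Λ M (s := 2 * b + 1) (by omega)
  refine ⟨Γ', Λ', iΓ, jΓ, iΛ, jΛ, hstates, ?_, M', hM'⟩
  rw [hsymbols, hΛ, hΓ, Nat.cast_mul, Nat.cast_succ]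
  exact mul_le_mul_of_nonneg_right (CounterSimulation.add_one_le_symbol_bound hn hb) m.cast_nonneg
end
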